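/- arXiv:2208.00917 — 4 statements merged into one kernel-verified Lean document; each statement's English description precedes it below -/
import Mathlib

section
/- Suppose that n is even and that the subgraph G_{>0} is connected, and that J is ferromagnetic. Then there exist continuous functions x_1, …, x_{n/2} : [0,∞) → ℝ such that for every t ≥ 0 one has 0 < x_1(t) < x_2(t) < … < x_{n/2}(t) < π/2 and {x ∈ (0,π/2) : Z_{G,t}(x) = 0} = {x_1(t), …, x_{n/2}(t)}; moreover, setting x_0(0) := 0 and x_{n/2+1}(0) := π/2, for each k ∈ {1, …, n/2} exactly one of the following three cases occurs: (a) x_k(t) = x_k(0) for every t ∈ [0,∞); (b) x_k is strictly decreasing on [0,∞) and x_k(t) ∈ (x_{k−1}(0), x_k(0)) for every t ∈ (0,∞); (c) x_k is strictly increasing on [0,∞) and x_k(t) ∈ (x_k(0), x_{k+1}(0)) for every t ∈ (0,∞). -/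
open scoped Real

noncomputable def spin (b : Bool) : ℝ := if b then 1 else -1

noncomputable def pairProd {V : Type} (σ : V → Bool) (e : Sym2 V) : ℝ :=
  Sym2.lift ⟨fun u v => spin (σ u) * spin (σ v), fun _ _ => mul_comm _ _⟩ e

/-- The Ising partition function `Z_{G,t}(x)` with an extra coupling `t` at the edge
`u₀v₀`, couplings `J` on the edge set `E`, and (complex) external field `i·x`. -/
noncomputable def IsingZ {V : Type} [Fintype V] [DecidableEq V]
    (E : Finset (Sym2 V)) (J : Sym2 V → ℝ) (u₀ v₀ : V) (t x : ℂ) : ℂ :=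
  ∑ σ : V → Bool, Complex.exp
    (t * ((spin (σ u₀) * spin (σ v₀) : ℝ) : ℂ)
      + ((∑ e ∈ E, J e * pairProd σ e : ℝ) : ℂ)
      + Complex.I * x * ((∑ u, spin (σ u) : ℝ) : ℂ))

/-- Exactly one of three propositions holds. -/
def ExactlyOne (A B C : Prop) : Prop :=
  (A ∧ ¬B ∧ ¬C) ∨ (¬A ∧ B ∧ ¬C) ∨ (¬A ∧ ¬B ∧ C)

/-!
In an imaginary field the partition function is, up to a phase, the Lee–Yang polynomial at the
fugacity `ζ = exp (2 i x)`, and for ferromagnetic couplings all its zeros lie on the unit circle.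
They are simple when the positive couplings connect the graph: the multivariate polynomial does not
vanish on the closed polydisc as long as one fugacity is zero, so that moving from a zero `ζ`
towards the origin the polynomial grows at least linearly. Complex conjugation then leaves exactly
`⌊n / 2⌋` simple zeros in `(0, π / 2)` for every `t ≥ 0`, and the implicit function theorem makes
them continuous in `t`. Finally `Z t x = cosh t * C x + sinh t * D x`, so an `x` that is a zero at
two times is a zero at all times. A moving zero therefore never returns to an earlier position of
any zero, and is monotone and confined between the neighbouring initial zeros.
-/

section Quadratic

lemma norm_sub_le_norm_one_sub_mul {q : ℝ} (hq : |q| ≤ 1) {α : ℂ} (hα : ‖α‖ ≤ 1) :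
    ‖(q : ℂ) - α‖ ≤ ‖1 - q * α‖ := by
  have hnonneg : 0 ≤ (1 - q ^ 2) * (1 - Complex.normSq α) := by
    rw [Complex.normSq_eq_norm_sq]
    exact mul_nonneg (by linarith [(sq_le_one_iff_abs_le_one q).2 hq])
      (by nlinarith [norm_nonneg α])
  rw [← sq_le_sq₀ (norm_nonneg _) (norm_nonneg _), ← Complex.normSq_eq_norm_sq,
    ← Complex.normSq_eq_norm_sq]
  simp only [Complex.normSq_apply, Complex.sub_re, Complex.sub_im, Complex.ofReal_re,
    Complex.ofReal_im, Complex.one_re, Complex.one_im, Complex.re_ofReal_mul,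
    Complex.im_ofReal_mul] at hnonneg ⊢
  linarith

lemma add_mul_add_ne_zero_of_quadratic_ne_zero {a b c : ℂ} {q : ℝ} (hq : |q| ≤ 1)
    (h : ∀ ζ : ℂ, ‖ζ‖ ≤ 1 → a + b * ζ + c * ζ ^ 2 ≠ 0) : a + b * q + c ≠ 0 := by
  have ha : a ≠ 0 := by simpa using h 0 (by simp)
  -- The reciprocals `α`, `β` of the zeros of the quadratic lie in the open unit disc and
  -- `(q - α) / (1 - q α)` lies in the closed one, so `(q - α) β = 1 - q α` is impossible.
  obtain ⟨α, hα⟩ : ∃ α : ℂ, a * (α * α) + b * α + c = 0 :=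
    exists_quadratic_eq_zero ha (IsAlgClosed.exists_eq_mul_self _)
  obtain ⟨β, hβ⟩ : ∃ β : ℂ, b = -(a * (α + β)) := ⟨-b / a - α, by field_simp; ring⟩
  have hc : c = a * (α * β) := by linear_combination hα - α * hβ
  have lt_one : ∀ γ δ : ℂ, b = -(a * (γ + δ)) → c = a * (γ * δ) → ‖γ‖ < 1 := by
    intro γ δ hb hc
    by_contra! hγ
    have hγ0 : γ ≠ 0 := norm_pos_iff.1 (one_pos.trans_le hγ)
    refine h γ⁻¹ (by simpa using inv_le_one_of_one_le₀ hγ) ?_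
    rw [hb, hc]
    field_simp
    ring
  have hα1 := lt_one α β hβ hc
  have hβ1 := lt_one β α (by rw [hβ, add_comm]) (by rw [hc, mul_comm α])
  have hqα : 0 < ‖1 - q * α‖ := by
    refine norm_pos_iff.2 (sub_ne_zero.2 fun h1 => ?_)
    have : ‖(q : ℂ) * α‖ < 1 := by
      rw [norm_mul, Complex.norm_real, Real.norm_eq_abs]
      nlinarith [norm_nonneg α, abs_nonneg q]
    simp [← h1] at this
  have hfactor : a + b * q + c = a * ((1 - q * α) - (q - α) * β) := by
    rw [hβ, hc]
    ring
  rw [hfactor]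
  refine mul_ne_zero ha (sub_ne_zero.2 fun heq => ?_)
  refine absurd (congrArg norm heq) (ne_of_gt ?_)
  calc ‖((q : ℂ) - α) * β‖ ≤ ‖1 - q * α‖ * ‖β‖ := by
        rw [norm_mul]
        gcongr
        exact norm_sub_le_norm_one_sub_mul hq hα1.le
    _ < ‖1 - q * α‖ := mul_lt_of_lt_one_right hqα hβ1

lemma sum_mul_ite_ne_zero_of_sum_mul_pow_ne_zero {ι : Type*} {s : Finset ι} {f : ι → ℂ}
    {k : ι → ℕ} (hk : ∀ i ∈ s, k i ≤ 2) {q : ℝ} (hq : |q| ≤ 1)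
    (h : ∀ ζ : ℂ, ‖ζ‖ ≤ 1 → ∑ i ∈ s, f i * ζ ^ k i ≠ 0) :
    ∑ i ∈ s, f i * (if k i = 1 then (q : ℂ) else 1) ≠ 0 := by
  have group : ∀ g : ℕ → ℂ, g 0 = 1 → ∑ i ∈ s, f i * g (k i) =
      ∑ i ∈ s with k i = 0, f i + (∑ i ∈ s with k i = 1, f i) * g 1
        + (∑ i ∈ s with k i = 2, f i) * g 2 := by
    intro g hg
    simp only [Finset.sum_filter, Finset.sum_mul, ← Finset.sum_add_distrib]
    refine Finset.sum_congr rfl fun i hi => ?_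
    have := hk i hi
    interval_cases k i <;> simp [hg]
  rw [group (fun j => if j = 1 then (q : ℂ) else 1) (by simp)]
  simpa using add_mul_add_ne_zero_of_quadratic_ne_zero hq fun ζ hζ => by
    simpa [group (ζ ^ ·) (pow_zero ζ)] using h ζ hζ

end Quadratic

section Couplings

variable {V : Type}

lemma spin_not (b : Bool) : spin (!b) = -spin b := by cases b <;> simp [spin]

lemma pairProd_mk (σ : V → Bool) (u v : V) : pairProd σ s(u, v) = spin (σ u) * spin (σ v) := rfl

lemma pairProd_not (σ : V → Bool) (e : Sym2 V) : pairProd (fun u => !σ u) e = pairProd σ e := by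
  induction e with | _ u v => simp only [pairProd_mk, spin_not, neg_mul_neg]

lemma pairProd_eq_one_or_eq_neg_one (σ : V → Bool) (e : Sym2 V) :
    pairProd σ e = 1 ∨ pairProd σ e = -1 := by
  induction e with | _ u v => cases hu : σ u <;> cases hv : σ v <;> simp [pairProd_mk, spin, hu, hv]

/-- The number of endpoints of the edge `s(u, v)` carrying a plus spin; a loop counts twice. This is
the degree in the quadratic to which Asano contraction is applied. -/
def plusCount (σ : V → Bool) (u v : V) : ℕ := (if σ u then 1 else 0) + (if σ v then 1 else 0)

lemma plusCount_le_two (σ : V → Bool) (u v : V) : plusCount σ u v ≤ 2 := by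
  unfold plusCount
  split_ifs <;> omega

lemma exp_mul_pairProd (c : ℝ) (σ : V → Bool) (u v : V) :
    Real.exp (c * pairProd σ s(u, v)) =
      Real.exp c * if plusCount σ u v = 1 then Real.exp (-2 * c) else 1 := by
  cases hu : σ u <;> cases hv : σ v <;>
    simp [pairProd_mk, plusCount, spin, hu, hv, ← Real.exp_add] <;> ring

variable [Fintype V]

/-- The Boltzmann weight of the configuration `σ` for the pair interactions `J`, without external
field. The interactions live on all of `Sym2 V`; an edge is absent when its coupling is zero. -/
noncomputable def isingWeight (J : Sym2 V → ℝ) (σ : V → Bool) : ℝ :=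
  Real.exp (∑ e, J e * pairProd σ e)

lemma isingWeight_pos (J : Sym2 V → ℝ) (σ : V → Bool) : 0 < isingWeight J σ := Real.exp_pos _

lemma isingWeight_not (J : Sym2 V → ℝ) (σ : V → Bool) :
    isingWeight J (fun u => !σ u) = isingWeight J σ := by
  simp only [isingWeight, pairProd_not]

lemma isingWeight_zero (σ : V → Bool) : isingWeight 0 σ = 1 := by simp [isingWeight]

variable [DecidableEq V]

lemma isingWeight_add_single (J : Sym2 V → ℝ) (e : Sym2 V) (t : ℝ) (σ : V → Bool) :
    isingWeight (J + Pi.single e t) σ = isingWeight J σ * Real.exp (t * pairProd σ e) := by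
  simp [isingWeight, ← Real.exp_add, add_mul, Finset.sum_add_distrib, Pi.single_apply]

/-- The partition function of the Ising model as a polynomial in independent fugacities `z u`; only
the plus spins contribute their fugacity. -/
noncomputable def leeYangPoly (J : Sym2 V → ℝ) (z : V → ℂ) : ℂ :=
  ∑ σ : V → Bool, (isingWeight J σ : ℂ) * ∏ u, if σ u then z u else 1

lemma continuous_leeYangPoly (J : Sym2 V → ℝ) : Continuous (leeYangPoly J) := by
  refine continuous_finsetSum _ fun σ _ => continuous_const.mul ?_
  refine continuous_finsetProd _ fun u _ => ?_
  split_ifs <;> fun_prop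

lemma leeYangPoly_zero_coupling (z : V → ℂ) : leeYangPoly 0 z = ∏ u, (z u + 1) := by
  simp only [leeYangPoly, isingWeight_zero, Complex.ofReal_one, one_mul]
  rw [← Fintype.piFinset_univ]
  simp_rw [← Finset.prod_univ_sum (fun _ => Finset.univ) fun u (b : Bool) => if b then z u else 1]
  simp

lemma prod_ite_update (σ : V → Bool) (z : V → ℂ) (u : V) (ζ : ℂ) :
    (∏ w, if σ w then Function.update z u ζ w else 1) =
      (if σ u then ζ else 1) * ∏ w ∈ Finset.univ.erase u, if σ w then z w else 1 := by
  rw [← Finset.mul_prod_erase _ _ (Finset.mem_univ u), Function.update_self]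
  congr 1
  refine Finset.prod_congr rfl fun w hw => ?_
  rw [Function.update_of_ne (Finset.ne_of_mem_erase hw)]

lemma leeYangPoly_update (J : Sym2 V → ℝ) (z : V → ℂ) (u : V) (ζ : ℂ) :
    leeYangPoly J (Function.update z u ζ) = leeYangPoly J (Function.update z u 0) +
      ζ * (leeYangPoly J (Function.update z u 1) - leeYangPoly J (Function.update z u 0)) := by
  simp only [leeYangPoly, prod_ite_update, ← Finset.sum_sub_distrib, Finset.mul_sum,
    ← Finset.sum_add_distrib]
  refine Finset.sum_congr rfl fun σ _ => ?_
  split_ifs <;> ring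

end Couplings

section LeeYang

variable {V : Type} [Fintype V] [DecidableEq V]

lemma norm_update_le (z : V → ℂ) (u : V) (ζ : ℂ) :
    ‖Function.update z u ζ‖ ≤ max ‖z‖ ‖ζ‖ := by
  refine (pi_norm_le_iff_of_nonneg (by positivity)).2 fun w => ?_
  rw [Function.update_apply]
  split_ifs
  exacts [le_max_right _ _, le_max_of_le_left (norm_le_pi_norm z w)]

/-- The fugacities `z` with the one at `u` multiplied by `ζ`. Scaling both endpoints of an edge by
`ζ` isolates the dependence of the polynomial on the spins of that edge. -/
def scaleAt (u : V) (ζ : ℂ) (z : V → ℂ) : V → ℂ := Function.update z u (ζ * z u)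

lemma norm_scaleAt_le (u : V) {ζ : ℂ} (hζ : ‖ζ‖ ≤ 1) (z : V → ℂ) : ‖scaleAt u ζ z‖ ≤ ‖z‖ := by
  refine (norm_update_le z u _).trans (max_le le_rfl ?_)
  rw [norm_mul]
  exact (mul_le_of_le_one_left (norm_nonneg _) hζ).trans (norm_le_pi_norm z u)

lemma prod_ite_scaleAt (σ : V → Bool) (u : V) (ζ : ℂ) (z : V → ℂ) :
    (∏ w, if σ w then scaleAt u ζ z w else 1) =
      (∏ w, if σ w then z w else 1) * if σ u then ζ else 1 := by
  rw [scaleAt, prod_ite_update, ← Finset.mul_prod_erase Finset.univ _ (Finset.mem_univ u)]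
  split_ifs <;> ring

lemma leeYangPoly_scaleAt_scaleAt (J : Sym2 V → ℝ) (u v : V) (ζ : ℂ) (z : V → ℂ) :
    leeYangPoly J (scaleAt u ζ (scaleAt v ζ z)) =
      ∑ σ : V → Bool, (isingWeight J σ * ∏ w, if σ w then z w else 1) * ζ ^ plusCount σ u v := by
  simp only [leeYangPoly, prod_ite_scaleAt, plusCount, pow_add, pow_ite, pow_one, pow_zero]
  exact Finset.sum_congr rfl fun σ _ => by ring

lemma leeYangPoly_add_single (J : Sym2 V → ℝ) (u v : V) (c : ℝ) (z : V → ℂ) :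
    leeYangPoly (J + Pi.single s(u, v) c) z = Real.exp c *
      ∑ σ : V → Bool, (isingWeight J σ * ∏ w, if σ w then z w else 1) *
        if plusCount σ u v = 1 then (Real.exp (-2 * c) : ℂ) else 1 := by
  simp only [leeYangPoly, isingWeight_add_single, exp_mul_pairProd, Finset.mul_sum]
  refine Finset.sum_congr rfl fun σ _ => ?_
  split_ifs <;> push_cast <;> ring

lemma leeYangPoly_add_single_ne_zero {J : Sym2 V → ℝ}
    (hJ : ∀ z : V → ℂ, ‖z‖ < 1 → leeYangPoly J z ≠ 0) (e : Sym2 V) {c : ℝ} (hc : 0 ≤ c)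
    {z : V → ℂ} (hz : ‖z‖ < 1) : leeYangPoly (J + Pi.single e c) z ≠ 0 := by
  induction e with | _ u v =>
  rw [leeYangPoly_add_single]
  refine mul_ne_zero (by simp) (sum_mul_ite_ne_zero_of_sum_mul_pow_ne_zero
    (fun σ _ => plusCount_le_two σ u v) (by simpa using hc) fun ζ hζ => ?_)
  rw [← leeYangPoly_scaleAt_scaleAt]
  exact hJ _ (((norm_scaleAt_le u hζ _).trans (norm_scaleAt_le v hζ z)).trans_lt hz)

/-- The Lee–Yang theorem; `‖z‖` is the sup norm, so `z` ranges over the open polydisc. -/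
theorem leeYangPoly_ne_zero {J : Sym2 V → ℝ} (hJ : 0 ≤ J) {z : V → ℂ} (hz : ‖z‖ < 1) :
    leeYangPoly J z ≠ 0 := by
  suffices h : ∀ (s : Finset (Sym2 V)) (z : V → ℂ), ‖z‖ < 1 →
      leeYangPoly (∑ e ∈ s, Pi.single e (J e)) z ≠ 0 by
    simpa only [Finset.univ_sum_single] using h Finset.univ z hz
  intro s
  induction s using Finset.induction_on with
  | empty =>
    intro z hz
    rw [Finset.sum_empty, leeYangPoly_zero_coupling]
    refine Finset.prod_ne_zero_iff.2 fun u _ h => ?_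
    have := (norm_le_pi_norm z u).trans_lt hz
    simp [eq_neg_of_add_eq_zero_left h] at this
  | insert e s he ih =>
    intro z hz
    rw [Finset.sum_insert he, add_comm]
    exact leeYangPoly_add_single_ne_zero ih e (hJ e) hz

end LeeYang

section Boundary

lemma norm_le_norm_of_forall_add_mul_ne_zero {a b : ℂ}
    (h : ∀ ζ : ℂ, ‖ζ‖ < 1 → a + ζ * b ≠ 0) : ‖b‖ ≤ ‖a‖ := by
  by_contra! hab
  have hb : b ≠ 0 := norm_pos_iff.1 ((norm_nonneg a).trans_lt hab)
  refine h (-a / b) ?_ (by field_simp; ring)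
  rw [norm_div, norm_neg]
  exact (div_lt_one (norm_pos_iff.2 hb)).2 hab

variable {V : Type}

/-- The graph `G_{>0}` of the pairs with positive coupling. A positive coupling on the diagonal of
`Sym2 V` gives no edge. -/
def positiveGraph (J : Sym2 V → ℝ) : SimpleGraph V := SimpleGraph.fromEdgeSet {e | 0 < J e}

lemma connected_positiveGraph_mono {J K : Sym2 V → ℝ} (hJK : J ≤ K)
    (hconn : (positiveGraph J).Connected) : (positiveGraph K).Connected :=
  hconn.mono <| SimpleGraph.fromEdgeSet_mono fun e he => lt_of_lt_of_le he (hJK e)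

lemma positiveGraph_indicator (E : Finset (Sym2 V)) (J : Sym2 V → ℝ) :
    positiveGraph ((E : Set (Sym2 V)).indicator J) =
      SimpleGraph.fromEdgeSet {e : Sym2 V | e ∈ E ∧ 0 < J e} := by
  refine congrArg _ (Set.ext fun e => ?_)
  by_cases he : e ∈ E <;> simp [he]

variable {J : Sym2 V → ℝ} {z : V → ℂ}

lemma exists_positive_edge_of_eq_zero_of_ne_zero (hconn : (positiveGraph J).Connected) {u w : V}
    (hu : z u = 0) (hw : z w ≠ 0) : ∃ a b, 0 < J s(a, b) ∧ z a = 0 ∧ z b ≠ 0 := by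
  obtain ⟨p⟩ := hconn.preconnected u w
  obtain ⟨d, -, ha, hb⟩ := p.exists_boundary_dart {v | z v = 0} hu hw
  exact ⟨d.fst, d.snd, ((SimpleGraph.fromEdgeSet_adj _).1 d.adj).1, ha, hb⟩

variable [Fintype V] [DecidableEq V]

lemma norm_leeYangPoly_update_sub_le (hJ : 0 ≤ J) (hz : ‖z‖ ≤ 1) (u : V) :
    ‖leeYangPoly J (Function.update z u 1) - leeYangPoly J (Function.update z u 0)‖ ≤
      ‖leeYangPoly J (Function.update z u 0)‖ := by
  have cont (ζ : ℂ) : Continuous fun y : V → ℂ => leeYangPoly J (Function.update y u ζ) :=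
    (continuous_leeYangPoly J).comp (continuous_id.update u continuous_const)
  have hz' : z ∈ closure (Metric.ball 0 1) := by
    rwa [closure_ball _ one_ne_zero, mem_closedBall_zero_iff]
  refine le_on_closure (fun y hy => ?_) ((cont 1).sub (cont 0)).norm.continuousOn
    (cont 0).norm.continuousOn hz'
  refine norm_le_norm_of_forall_add_mul_ne_zero fun ζ hζ => ?_
  have := leeYangPoly_ne_zero hJ
    ((norm_update_le y u ζ).trans_lt (max_lt (mem_ball_zero_iff.1 hy) hζ))
  rwa [leeYangPoly_update] at this

lemma one_sub_norm_mul_norm_le_norm_leeYangPoly (hJ : 0 ≤ J) (hz : ‖z‖ ≤ 1) (u : V) :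
    (1 - ‖z u‖) * ‖leeYangPoly J (Function.update z u 0)‖ ≤ ‖leeYangPoly J z‖ := by
  set a := leeYangPoly J (Function.update z u 0)
  set b := leeYangPoly J (Function.update z u 1) - a
  have hsum : leeYangPoly J z = a + z u * b := by
    simpa only [Function.update_eq_self] using leeYangPoly_update J z u (z u)
  calc (1 - ‖z u‖) * ‖a‖ = ‖a‖ - ‖z u‖ * ‖a‖ := by ring
    _ ≤ ‖a‖ - ‖z u * b‖ := by
      rw [norm_mul]
      gcongr
      exact norm_leeYangPoly_update_sub_le hJ hz u
    _ ≤ ‖leeYangPoly J z‖ := hsum ▸ norm_sub_le_norm_add a (z u * b)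

lemma leeYangPoly_add_single_of_eq_zero (J : Sym2 V → ℝ) {u v : V} (hz : z u = 0) (c : ℝ) :
    leeYangPoly (J + Pi.single s(u, v) c) z =
      Real.exp c * leeYangPoly J (scaleAt v (Real.exp (-2 * c)) z) := by
  rw [leeYangPoly_add_single, leeYangPoly]
  simp only [prod_ite_scaleAt]
  congr 1
  refine Finset.sum_congr rfl fun σ _ => ?_
  cases hu : σ u
  · simp [plusCount, hu, mul_assoc]
  · have : (∏ w, if σ w then z w else 1) = 0 :=
      Finset.prod_eq_zero (Finset.mem_univ u) (by simp [hu, hz])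
    simp [this]

lemma leeYangPoly_ne_zero_of_update_ne_zero (hJ : 0 ≤ J) (hz : ‖z‖ ≤ 1) {u v : V} (hu : z u = 0)
    (huv : 0 < J s(u, v)) (h : leeYangPoly J (Function.update z v 0) ≠ 0) :
    leeYangPoly J z ≠ 0 := by
  set q : ℝ := Real.exp (-2 * J s(u, v)) with hq
  set J₀ : Sym2 V → ℝ := Function.update J s(u, v) 0
  have hJ₀ : 0 ≤ J₀ := le_update_iff.2 ⟨le_rfl, fun e _ => hJ e⟩
  have hJ_eq : J = J₀ + Pi.single s(u, v) (J s(u, v)) := by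
    ext e
    obtain rfl | he := eq_or_ne e s(u, v) <;> simp [J₀, *]
  have hupdate : Function.update z v 0 u = 0 := by
    rw [Function.update_apply, hu, ite_self]
  have hscale : Function.update (scaleAt v q z) v 0 = Function.update z v 0 :=
    Function.update_idem _ _ _
  have hscale' : scaleAt v q (Function.update z v 0) = Function.update z v 0 := by
    simp [scaleAt]
  have hq_norm : ‖(q : ℂ)‖ < 1 := by
    rw [Complex.norm_real, Real.norm_eq_abs, hq, Real.abs_exp]
    exact Real.exp_lt_one_iff.2 (by linarith)
  have hqz : ‖scaleAt v q z v‖ < 1 := by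
    rw [scaleAt, Function.update_self, norm_mul]
    exact (mul_le_of_le_one_right (norm_nonneg _) ((norm_le_pi_norm z v).trans hz)).trans_lt hq_norm
  rw [hJ_eq, leeYangPoly_add_single_of_eq_zero J₀ hupdate, hscale'] at h
  rw [hJ_eq, leeYangPoly_add_single_of_eq_zero J₀ hu]
  refine mul_ne_zero (left_ne_zero_of_mul h) (norm_pos_iff.1 ?_)
  refine lt_of_lt_of_le ?_ (one_sub_norm_mul_norm_le_norm_leeYangPoly hJ₀
    ((norm_scaleAt_le v hq_norm.le z).trans hz) v)
  rw [hscale]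
  exact mul_pos (sub_pos.2 hqz) (norm_pos_iff.2 (right_ne_zero_of_mul h))

theorem leeYangPoly_ne_zero_of_connected (hJ : 0 ≤ J) (hconn : (positiveGraph J).Connected)
    (hz : ‖z‖ ≤ 1) {u : V} (hu : z u = 0) : leeYangPoly J z ≠ 0 := by
  induction hk : {w | z w ≠ 0}.ncard using Nat.strong_induction_on generalizing z with | _ k ih =>
  by_cases hz0 : z = 0
  · exact leeYangPoly_ne_zero hJ (by simp [hz0])
  obtain ⟨w, hw⟩ := Function.ne_iff.1 hz0
  obtain ⟨a, b, hab, ha, hb⟩ := exists_positive_edge_of_eq_zero_of_ne_zero hconn hu hw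
  have hub : u ≠ b := by
    rintro rfl
    exact hb hu
  refine leeYangPoly_ne_zero_of_update_ne_zero hJ hz ha hab (ih _ ?_ ?_ ?_ rfl)
  · rw [← hk]
    refine Set.ncard_lt_ncard ((Set.ssubset_iff_of_subset fun v hv => ?_).2 ⟨b, hb, by simp⟩)
    rintro hv0
    by_cases hvb : v = b <;> simp_all
  · exact (norm_update_le z b 0).trans (max_le hz (by simp))
  · rw [Function.update_of_ne hub, hu]

end Boundary

section RadialDerivative

lemma le_norm_deriv_of_mul_le_norm {E : Type*} [NormedAddCommGroup E] [NormedSpace ℝ E]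
    {f : ℝ → E} {f' : E} {g : ℝ → ℝ} {a : ℝ} (hf : HasDerivAt f f' a) (hfa : f a = 0)
    (hg : ContinuousAt g a) (h : ∀ᶠ r in nhdsWithin a (Set.Iio a), (a - r) * g r ≤ ‖f r‖) :
    g a ≤ ‖f'‖ := by
  have hslope := (hasDerivWithinAt_iff_tendsto_slope' Set.self_notMem_Iio).1
    (hf.hasDerivWithinAt (s := Set.Iio a))
  refine le_of_tendsto_of_tendsto hg.continuousWithinAt.tendsto hslope.norm ?_
  filter_upwards [h, self_mem_nhdsWithin] with r hr hra
  rw [slope_def_module, hfa, sub_zero, norm_smul, norm_inv, Real.norm_eq_abs,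
    abs_of_neg (sub_neg.2 hra), neg_sub, le_inv_mul_iff₀ (sub_pos.2 hra)]
  exact hr

end RadialDerivative

section Diagonal

open Polynomial

variable {V : Type} [Fintype V] [DecidableEq V]

/-- The Lee–Yang polynomial with all fugacities equal, as a univariate polynomial; its zeros on the
unit circle are the zeros of the partition function. -/
noncomputable def leeYangDiag (J : Sym2 V → ℝ) : ℝ[X] :=
  ∑ σ : V → Bool, C (isingWeight J σ) * X ^ Fintype.card {u // σ u}

lemma aeval_leeYangDiag (J : Sym2 V → ℝ) (ζ : ℂ) :
    aeval ζ (leeYangDiag J) = leeYangPoly J fun _ => ζ := by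
  simp [leeYangDiag, leeYangPoly, Finset.prod_ite, Fintype.card_subtype]

lemma natDegree_leeYangDiag (J : Sym2 V → ℝ) : (leeYangDiag J).natDegree = Fintype.card V := by
  refine natDegree_eq_of_le_of_coeff_ne_zero ?_ (ne_of_gt ?_)
  · exact natDegree_sum_le_of_forall_le _ _ fun σ _ =>
      (natDegree_C_mul_X_pow_le _ _).trans (Fintype.card_subtype_le _)
  · rw [leeYangDiag, finsetSum_coeff]
    refine Finset.sum_pos' (fun σ _ => ?_) ⟨fun _ => true, Finset.mem_univ _, ?_⟩
    · rw [coeff_C_mul_X_pow]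
      split_ifs
      exacts [(isingWeight_pos J σ).le, le_rfl]
    · simpa using isingWeight_pos J _

lemma eval_one_leeYangDiag_pos (J : Sym2 V → ℝ) : 0 < (leeYangDiag J).eval 1 := by
  simp only [leeYangDiag, eval_finsetSum, eval_mul, eval_C, eval_pow, eval_X, one_pow, mul_one]
  exact Finset.sum_pos (fun σ _ => isingWeight_pos J σ) Finset.univ_nonempty

lemma leeYangPoly_eq_prod_mul_leeYangPoly_inv (J : Sym2 V → ℝ) {z : V → ℂ} (hz : ∀ u, z u ≠ 0) :
    leeYangPoly J z = (∏ u, z u) * leeYangPoly J z⁻¹ := by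
  rw [leeYangPoly, leeYangPoly, Finset.mul_sum]
  refine Fintype.sum_equiv (Equiv.piCongrRight fun _ => Equiv.boolNot) _ _ fun σ => ?_
  have hflip : isingWeight J (Equiv.piCongrRight (fun _ => Equiv.boolNot) σ) = isingWeight J σ :=
    isingWeight_not J σ
  rw [hflip, mul_left_comm, ← Finset.prod_mul_distrib]
  congr 2 with u
  cases h : σ u <;> simp [h, hz u]

variable {J : Sym2 V → ℝ} {ζ : ℂ}

lemma norm_eq_one_of_aeval_leeYangDiag_eq_zero (hJ : 0 ≤ J)
    (hζ : aeval ζ (leeYangDiag J) = 0) : ‖ζ‖ = 1 := by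
  have one_le : ∀ ξ : ℂ, (leeYangPoly J fun _ => ξ) = 0 → 1 ≤ ‖ξ‖ := by
    intro ξ hξ
    by_contra! h
    exact leeYangPoly_ne_zero hJ ((pi_norm_lt_iff one_pos).2 fun _ => h) hξ
  rw [aeval_leeYangDiag] at hζ
  have hζ1 := one_le ζ hζ
  have hζ0 : ζ ≠ 0 := norm_pos_iff.1 (one_pos.trans_le hζ1)
  rw [leeYangPoly_eq_prod_mul_leeYangPoly_inv J fun _ => hζ0, mul_eq_zero] at hζ
  have hinv := one_le ζ⁻¹ (hζ.resolve_left (Finset.prod_ne_zero_iff.2 fun _ _ => hζ0))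
  rw [norm_inv, one_le_inv₀ (norm_pos_iff.2 hζ0)] at hinv
  exact le_antisymm hinv hζ1

/-- The radial lower bound `(1 - r) c ≤ ‖p (r ζ)‖`, `c > 0`, rules out a double zero. -/
theorem aeval_derivative_leeYangDiag_ne_zero (hJ : 0 ≤ J)
    (hconn : (positiveGraph J).Connected) (hζ : aeval ζ (leeYangDiag J) = 0) :
    aeval ζ (derivative (leeYangDiag J)) ≠ 0 := by
  obtain ⟨u⟩ := hconn.nonempty
  have hζ1 := norm_eq_one_of_aeval_leeYangDiag_eq_zero hJ hζ
  let g (r : ℝ) : ℝ := ‖leeYangPoly J (Function.update (fun _ => r * ζ) u 0)‖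
  have hg : Continuous g := by
    refine ((continuous_leeYangPoly J).comp (Continuous.update ?_ u continuous_const)).norm
    fun_prop
  have hderiv : HasDerivAt (fun r : ℝ => aeval (r * ζ) (leeYangDiag J))
      (aeval ζ (derivative (leeYangDiag J)) * ζ) 1 := by
    have hmul : HasDerivAt (fun r : ℝ => r * ζ) ζ 1 := by
      simpa using (hasDerivAt_id (1 : ℝ)).ofReal_comp.mul_const ζ
    exact HasDerivAt.comp_of_eq 1 ((leeYangDiag J).hasDerivAt_aeval ζ) hmul (by simp)
  have hbound : ∀ r ∈ Set.Ioo (0 : ℝ) 1, (1 - r) * g r ≤ ‖aeval (r * ζ) (leeYangDiag J)‖ := by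
    intro r hr
    have hr_norm : ‖r * ζ‖ = r := by simp [hζ1, abs_of_pos hr.1]
    rw [aeval_leeYangDiag]
    simpa only [hr_norm] using one_sub_norm_mul_norm_le_norm_leeYangPoly (z := fun _ => r * ζ) hJ
      ((pi_norm_le_iff_of_nonneg zero_le_one).2 fun _ => hr_norm.trans_le hr.2.le) u
  have hpos : 0 < g 1 := by
    refine norm_pos_iff.2 <|
      leeYangPoly_ne_zero_of_connected hJ hconn ?_ (Function.update_self u _ _)
    refine (norm_update_le _ _ _).trans <|
      max_le ((pi_norm_le_iff_of_nonneg zero_le_one).2 ?_) ?_ <;> simp [hζ1]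
  have hle := le_norm_deriv_of_mul_le_norm hderiv (by simpa using hζ) hg.continuousAt
    (Filter.mem_of_superset (Ioo_mem_nhdsLT one_pos) hbound)
  exact left_ne_zero_of_mul (norm_pos_iff.1 (hpos.trans_le hle))

end Diagonal

section Counting

open Polynomial

lemma ncard_rootSet_complex_eq (p : ℝ[X]) :
    (p.rootSet ℂ).ncard = 2 * {ζ ∈ p.rootSet ℂ | 0 < ζ.im}.ncard +
      {ζ ∈ p.rootSet ℂ | ζ.im = 0}.ncard := by
  have finite_sep (P : ℂ → Prop) : {ζ ∈ p.rootSet ℂ | P ζ}.Finite :=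
    (p.rootSet_finite ℂ).subset (Set.sep_subset _ _)
  have conj_image : (starRingEnd ℂ) '' {ζ ∈ p.rootSet ℂ | 0 < ζ.im} =
      {ζ ∈ p.rootSet ℂ | ζ.im < 0} := by
    rw [Set.image_eq_preimage_of_inverse Complex.conj_conj Complex.conj_conj]
    ext ζ
    simp [mem_rootSet, aeval_conj]
  have split : p.rootSet ℂ = {ζ ∈ p.rootSet ℂ | 0 < ζ.im} ∪ {ζ ∈ p.rootSet ℂ | ζ.im < 0} ∪
      {ζ ∈ p.rootSet ℂ | ζ.im = 0} := by
    ext ζ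
    have := lt_trichotomy ζ.im 0
    simp only [Set.mem_union, Set.mem_ofPred_eq]
    tauto
  conv_lhs => rw [split]
  rw [Set.ncard_union_eq _ ((finite_sep _).union (finite_sep _)) (finite_sep _),
    Set.ncard_union_eq _ (finite_sep _) (finite_sep _), ← conj_image,
    Set.ncard_image_of_injective _ (starRingEnd ℂ).injective]
  · omega
  · exact Set.disjoint_left.2 fun ζ hpos hneg => hpos.2.not_gt hneg.2
  · refine Set.disjoint_left.2 fun ζ hne h0 => ?_
    exact hne.elim (fun hpos => hpos.2.ne' h0.2) fun hneg => hneg.2.ne h0.2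

lemma ncard_rootSet_complex_eq_natDegree {p : ℝ[X]}
    (h : ∀ ζ : ℂ, aeval ζ p = 0 → aeval ζ (derivative p) ≠ 0) :
    (p.rootSet ℂ).ncard = p.natDegree := by
  rw [← Nat.card_coe_set_eq, Nat.card_eq_fintype_card]
  refine card_rootSet_eq_natDegree ?_ (IsAlgClosed.splits _)
  refine (isCoprime_iff_aeval_ne_zero_of_isAlgClosed ℝ ℂ _ _).2 fun ζ => ?_
  exact or_iff_not_imp_left.2 fun hζ => h ζ (not_not.1 hζ)

lemma image_exp_mul_I_Ioo :
    (fun θ : ℝ => Complex.exp (θ * Complex.I)) '' Set.Ioo 0 π = {ζ : ℂ | ‖ζ‖ = 1 ∧ 0 < ζ.im} := by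
  ext ζ
  constructor
  · rintro ⟨θ, hθ, rfl⟩
    exact ⟨Complex.norm_exp_ofReal_mul_I θ, by
      simpa [Complex.exp_ofReal_mul_I_im] using Real.sin_pos_of_mem_Ioo hθ⟩
  · rintro ⟨hnorm, him⟩
    obtain ⟨θ, hθ, rfl⟩ := Complex.norm_eq_one_iff'.1 hnorm
    rw [Complex.exp_ofReal_mul_I_im] at him
    refine ⟨θ, ⟨?_, lt_of_le_of_ne hθ.2 ?_⟩, rfl⟩
    · by_contra! h
      exact him.not_ge (Real.sin_nonpos_of_nonpos_of_neg_pi_le h hθ.1.le)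
    · rintro rfl
      simp at him

lemma injOn_exp_mul_I_Ioo : Set.InjOn (fun θ : ℝ => Complex.exp (θ * Complex.I)) (Set.Ioo 0 π) := by
  intro θ hθ θ' hθ' h
  have := congrArg Complex.re h
  simp only [Complex.exp_ofReal_mul_I_re] at this
  exact Real.injOn_cos (Set.Ioo_subset_Icc_self hθ) (Set.Ioo_subset_Icc_self hθ') this

theorem encard_setOf_aeval_exp_mul_I_eq_zero {p : ℝ[X]} (hp : p.eval 1 ≠ 0)
    (hnorm : ∀ ζ : ℂ, aeval ζ p = 0 → ‖ζ‖ = 1)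
    (hsimple : ∀ ζ : ℂ, aeval ζ p = 0 → aeval ζ (derivative p) ≠ 0) :
    {θ : ℝ | θ ∈ Set.Ioo 0 π ∧ aeval (Complex.exp (θ * Complex.I)) p = 0}.encard =
      (p.natDegree / 2 : ℕ) := by
  have hp0 : p ≠ 0 := by
    rintro rfl
    simp at hp
  have hreal : {ζ ∈ p.rootSet ℂ | ζ.im = 0}.ncard ≤ 1 := by
    refine (Set.ncard_le_ncard (t := {-1}) ?_).trans (Set.ncard_singleton _).le
    rintro ζ ⟨hζ, him⟩
    obtain ⟨x, rfl⟩ : ∃ x : ℝ, ζ = x := ⟨ζ.re, Complex.ext rfl him⟩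
    have hroot := (mem_rootSet.1 hζ).2
    have hx := hnorm _ hroot
    rw [Complex.norm_real, Real.norm_eq_abs] at hx
    obtain rfl | rfl := eq_or_eq_neg_of_abs_eq hx
    · exact absurd (by simpa using (aeval_algebraMap_eq_zero_iff ℂ (1 : ℝ) p).1 hroot) hp
    · simp
  have himage : (fun θ : ℝ => Complex.exp (θ * Complex.I)) ''
      {θ : ℝ | θ ∈ Set.Ioo 0 π ∧ aeval (Complex.exp (θ * Complex.I)) p = 0} =
        {ζ ∈ p.rootSet ℂ | 0 < ζ.im} := by
    have hpre : {θ : ℝ | θ ∈ Set.Ioo 0 π ∧ aeval (Complex.exp (θ * Complex.I)) p = 0} =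
        Set.Ioo 0 π ∩ (fun θ : ℝ => Complex.exp (θ * Complex.I)) ⁻¹' p.rootSet ℂ := by
      ext θ
      simp [mem_rootSet, hp0]
    rw [hpre, Set.image_inter_preimage, image_exp_mul_I_Ioo]
    ext ζ
    refine ⟨fun h => ⟨h.2, h.1.2⟩, fun h => ⟨⟨hnorm ζ (mem_rootSet.1 h.1).2, h.2⟩, h.1⟩⟩
  have hcount := ncard_rootSet_complex_eq p
  rw [ncard_rootSet_complex_eq_natDegree hsimple] at hcount
  rw [← (injOn_exp_mul_I_Ioo.mono (Set.sep_subset _ _)).encard_image, himage,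
    ← ((p.rootSet_finite ℂ).subset (Set.sep_subset _ _)).cast_ncard_eq]
  congr 1
  omega

end Counting

section ImaginaryField

open Polynomial

variable {V : Type} [Fintype V]

/-- The total spin of a configuration, to which the external field couples. -/
noncomputable def magnetization (σ : V → Bool) : ℝ := ∑ u, spin (σ u)

lemma magnetization_not (σ : V → Bool) : magnetization (fun u => !σ u) = -magnetization σ := by
  simp only [magnetization, spin_not, Finset.sum_neg_distrib]

lemma magnetization_eq (σ : V → Bool) :
    magnetization σ = 2 * Fintype.card {u // σ u} - Fintype.card V := by
  have hspin : ∀ b : Bool, spin b = 2 * (if b then 1 else 0) - 1 := by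
    intro b
    cases b <;> norm_num [spin]
  simp only [magnetization, hspin, Finset.sum_sub_distrib, ← Finset.mul_sum, Finset.sum_boole,
    Fintype.card_subtype, Finset.sum_const, Finset.card_univ, nsmul_eq_mul, mul_one]

variable [DecidableEq V]

/-- The partition function in the imaginary field `i x`, which is real by the spin flip symmetry. -/
noncomputable def isingCos (J : Sym2 V → ℝ) (x : ℝ) : ℝ :=
  ∑ σ : V → Bool, isingWeight J σ * Real.cos (magnetization σ * x)

/-- The unnormalised expectation of `pairProd σ e` in the imaginary field `i x`; it is the
derivative of `isingCos` with respect to the coupling at `e`. -/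
noncomputable def isingEdgeCos (J : Sym2 V → ℝ) (e : Sym2 V) (x : ℝ) : ℝ :=
  ∑ σ : V → Bool, pairProd σ e * (isingWeight J σ * Real.cos (magnetization σ * x))

variable (J : Sym2 V → ℝ)

lemma contDiff_isingCos : ContDiff ℝ 1 (isingCos J) := by
  unfold isingCos
  fun_prop

lemma contDiff_isingEdgeCos (e : Sym2 V) : ContDiff ℝ 1 (isingEdgeCos J e) := by
  unfold isingEdgeCos
  fun_prop

lemma isingCos_add_single (e : Sym2 V) (t x : ℝ) :
    isingCos (J + Pi.single e t) x =
      Real.cosh t * isingCos J x + Real.sinh t * isingEdgeCos J e x := by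
  have hexp : ∀ σ : V → Bool,
      Real.exp (t * pairProd σ e) = Real.cosh t + Real.sinh t * pairProd σ e := by
    intro σ
    obtain h | h := pairProd_eq_one_or_eq_neg_one σ e
    · rw [h, mul_one, mul_one, Real.cosh_add_sinh]
    · rw [h, mul_neg_one, mul_neg_one, ← sub_eq_add_neg, Real.cosh_sub_sinh]
  simp only [isingCos, isingEdgeCos, isingWeight_add_single, hexp, Finset.mul_sum,
    ← Finset.sum_add_distrib]
  exact Finset.sum_congr rfl fun σ _ => by ring

lemma ofReal_isingCos (x : ℝ) :
    (isingCos J x : ℂ) =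
      ∑ σ, (isingWeight J σ : ℂ) * Complex.exp (Complex.I * x * magnetization σ) := by
  have hflip : ∑ σ, (isingWeight J σ : ℂ) * Complex.exp (-(Complex.I * x * magnetization σ)) =
      ∑ σ, (isingWeight J σ : ℂ) * Complex.exp (Complex.I * x * magnetization σ) := by
    refine Fintype.sum_equiv (Equiv.piCongrRight fun _ => Equiv.boolNot) _ _ fun σ => ?_
    change _ = (isingWeight J (fun u => !σ u) : ℂ) *
      Complex.exp (Complex.I * x * magnetization (fun u => !σ u))
    rw [isingWeight_not, magnetization_not, Complex.ofReal_neg, mul_neg]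
  rw [← add_self_div_two (∑ σ, (isingWeight J σ : ℂ) * _)]
  nth_rewrite 2 [← hflip]
  rw [isingCos, ← Finset.sum_add_distrib, Finset.sum_div, Complex.ofReal_sum]
  refine Finset.sum_congr rfl fun σ _ => ?_
  push_cast [Complex.cos]
  ring_nf

lemma isingZ_eq_ofReal_isingCos (E : Finset (Sym2 V)) (u v : V) (t x : ℝ) :
    IsingZ E J u v t x = isingCos ((E : Set (Sym2 V)).indicator J + Pi.single s(u, v) t) x := by
  rw [ofReal_isingCos, IsingZ]
  refine Finset.sum_congr rfl fun σ _ => ?_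
  have hsum : ∑ e, (E : Set (Sym2 V)).indicator J e * pairProd σ e =
      ∑ e ∈ E, J e * pairProd σ e := by
    simp [Set.indicator_apply, ite_mul]
  rw [isingWeight_add_single, isingWeight, hsum, pairProd_mk, magnetization]
  push_cast
  rw [← Complex.exp_add, ← Complex.exp_add, add_comm (∑ e ∈ E, _)]

lemma ofReal_isingCos_eq_aeval_leeYangDiag (x : ℝ) :
    (isingCos J x : ℂ) = Complex.exp (-(Fintype.card V * x * Complex.I)) *
      aeval (Complex.exp (2 * x * Complex.I)) (leeYangDiag J) := by
  rw [ofReal_isingCos, leeYangDiag, map_sum, Finset.mul_sum]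
  refine Finset.sum_congr rfl fun σ _ => ?_
  simp only [map_mul, aeval_C, Complex.coe_algebraMap, map_pow, aeval_X, ← Complex.exp_nat_mul]
  rw [mul_left_comm, ← Complex.exp_add, magnetization_eq]
  push_cast
  ring_nf

variable {J}

lemma isingCos_eq_zero_iff {x : ℝ} : isingCos J x = 0 ↔
    aeval (Complex.exp (2 * x * Complex.I)) (leeYangDiag J) = 0 := by
  rw [← Complex.ofReal_eq_zero, ofReal_isingCos_eq_aeval_leeYangDiag, mul_eq_zero,
    or_iff_right (Complex.exp_ne_zero _)]

theorem deriv_isingCos_ne_zero (hJ : 0 ≤ J) (hconn : (positiveGraph J).Connected) {x : ℝ}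
    (hx : isingCos J x = 0) : deriv (isingCos J) x ≠ 0 := by
  rw [isingCos_eq_zero_iff] at hx
  set ζ := Complex.exp (2 * x * Complex.I) with hζ
  have hofReal : HasDerivAt (fun y : ℝ => (isingCos J y : ℂ)) (deriv (isingCos J) x : ℝ) x :=
    ((contDiff_isingCos J).differentiable one_ne_zero x).hasDerivAt.ofReal_comp
  have hlinear (c : ℂ) : HasDerivAt (fun y : ℝ => c * y * Complex.I) (c * Complex.I) x := by
    simpa using ((hasDerivAt_id x).ofReal_comp.const_mul c).mul_const Complex.I
  have hpoly : HasDerivAt (fun y : ℝ => aeval (Complex.exp (2 * y * Complex.I)) (leeYangDiag J))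
      (aeval ζ (derivative (leeYangDiag J)) * (ζ * (2 * Complex.I))) x :=
    HasDerivAt.comp_of_eq x ((leeYangDiag J).hasDerivAt_aeval ζ) (hlinear 2).cexp rfl
  have hprod := (hlinear (Fintype.card V)).neg.cexp.mul hpoly
  rw [hx, mul_zero, zero_add] at hprod
  have hderiv := hofReal.unique
    (hprod.congr_of_eventuallyEq (.of_forall (ofReal_isingCos_eq_aeval_leeYangDiag J)))
  rw [← Complex.ofReal_ne_zero, hderiv]
  exact mul_ne_zero (Complex.exp_ne_zero _)
    (mul_ne_zero (aeval_derivative_leeYangDiag_ne_zero hJ hconn hx) (by simp [hζ]))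

theorem encard_setOf_isingCos_eq_zero (hJ : 0 ≤ J) (hconn : (positiveGraph J).Connected) :
    {x | x ∈ Set.Ioo 0 (π / 2) ∧ isingCos J x = 0}.encard = (Fintype.card V / 2 : ℕ) := by
  have himage : (2 * ·) '' {x | x ∈ Set.Ioo 0 (π / 2) ∧ isingCos J x = 0} =
      {θ : ℝ | θ ∈ Set.Ioo 0 π ∧ aeval (Complex.exp (θ * Complex.I)) (leeYangDiag J) = 0} := by
    ext θ
    simp only [Set.mem_image, Set.mem_ofPred_eq, Set.mem_Ioo, isingCos_eq_zero_iff]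
    constructor
    · rintro ⟨x, ⟨⟨h0, h1⟩, hx⟩, rfl⟩
      exact ⟨⟨by linarith, by linarith⟩, by simpa using hx⟩
    · rintro ⟨⟨h0, h1⟩, hθ⟩
      have hθ' : (θ : ℂ) = 2 * (θ / 2 : ℝ) := by
        push_cast
        ring
      exact ⟨θ / 2, ⟨⟨by linarith, by linarith⟩, by rwa [hθ'] at hθ⟩, by ring⟩
  rw [← (mul_right_injective₀ (two_ne_zero' ℝ)).encard_image, himage,
    encard_setOf_aeval_exp_mul_I_eq_zero (eval_one_leeYangDiag_pos J).ne'
      (fun _ => norm_eq_one_of_aeval_leeYangDiag_eq_zero hJ)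
      fun _ => aeval_derivative_leeYangDiag_ne_zero hJ hconn, natDegree_leeYangDiag]

end ImaginaryField

section MovingZeros

open Set Filter Topology

lemma exists_eventually_eq_zero_of_deriv_ne_zero {F : ℝ → ℝ → ℝ}
    (hF : ContDiff ℝ 1 (Function.uncurry F)) {t₀ x₀ : ℝ} (h0 : F t₀ x₀ = 0)
    (hderiv : deriv (F t₀) x₀ ≠ 0) :
    ∃ y : ℝ → ℝ, Tendsto y (𝓝 t₀) (𝓝 x₀) ∧ ∀ᶠ t in 𝓝 t₀, F t (y t) = 0 := by
  have hstrict := (hF.contDiffAt (x := (t₀, x₀))).hasStrictFDerivAt one_ne_zero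
  set F' := fderiv ℝ (Function.uncurry F) (t₀, x₀)
  have hpartial : F' (0, 1) = deriv (F t₀) x₀ :=
    (hstrict.hasFDerivAt.comp_hasDerivAt x₀
      ((hasDerivAt_const x₀ t₀).prodMk (hasDerivAt_id x₀))).deriv.symm
  have hinv : (F' ∘L .inr ℝ ℝ ℝ).IsInvertible :=
    ⟨ContinuousLinearEquiv.unitsEquivAut ℝ (Units.mk0 _ hderiv), by ext; simp [hpartial]⟩
  refine ⟨hstrict.implicitFunctionOfProdDomain hinv,
    hstrict.tendsto_implicitFunctionOfProdDomain hinv, ?_⟩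
  simpa [h0] using hstrict.eventually_apply_implicitFunctionOfProdDomain hinv

lemma exists_strictMono_range_eq_of_encard_eq {α : Type*} [LinearOrder α] {s : Set α} {m : ℕ}
    (hs : s.encard = m) : ∃ f : Fin m → α, StrictMono f ∧ range f = s := by
  have hfin : s.Finite := finite_of_encard_eq_coe hs
  have hcard : hfin.toFinset.card = m := by
    rw [← Nat.cast_inj (R := ℕ∞), ← encard_coe_eq_coe_finsetCard, hfin.coe_toFinset, hs]
  exact ⟨hfin.toFinset.orderEmbOfFin hcard, OrderEmbedding.strictMono _, by simp⟩

lemma range_eq_of_injective_of_encard_eq {α : Type*} {s : Set α} {m : ℕ} (hs : s.encard = m)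
    {f : Fin m → α} (hf : Function.Injective f) (hmem : ∀ k, f k ∈ s) : range f = s := by
  refine (finite_range f).eq_of_subset_of_encard_le (range_subset_iff.2 hmem) ?_
  rw [hs, ← image_univ, hf.encard_image]
  simp

theorem exists_continuousOn_strictMono_range_eq_zeros {F : ℝ → ℝ → ℝ} {T U : Set ℝ} {m : ℕ}
    (hF : ContDiff ℝ 1 (Function.uncurry F)) (hU : IsOpen U)
    (hcard : ∀ t ∈ T, {x | x ∈ U ∧ F t x = 0}.encard = m)
    (hsimple : ∀ t ∈ T, ∀ x, F t x = 0 → deriv (F t) x ≠ 0) :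
    ∃ X : Fin m → ℝ → ℝ, (∀ k, ContinuousOn (X k) T) ∧ (∀ t ∈ T, StrictMono (X · t)) ∧
      ∀ t ∈ T, range (X · t) = {x | x ∈ U ∧ F t x = 0} := by
  choose! X hmono hrange using fun t ht => exists_strictMono_range_eq_of_encard_eq (hcard t ht)
  refine ⟨fun k t => X t k, fun k t ht => ?_, hmono, hrange⟩
  have hX : ∀ j, X t j ∈ {x | x ∈ U ∧ F t x = 0} := fun j => hrange t ht ▸ mem_range_self j
  choose y hy_tendsto hy_zero using fun j =>
    exists_eventually_eq_zero_of_deriv_ne_zero hF (hX j).2 (hsimple t ht _ (hX j).2)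
  have hy_mem : ∀ᶠ s in 𝓝 t, ∀ j, y j s ∈ U :=
    eventually_all.2 fun j => hy_tendsto j (hU.mem_nhds (hX j).1)
  have hy_mono : ∀ᶠ s in 𝓝 t, StrictMono (y · s) := by
    simp only [StrictMono, eventually_all]
    exact fun i j hij => (hy_tendsto i).eventually_lt (hy_tendsto j) (hmono t ht hij)
  have hy_eq : ∀ᶠ s in 𝓝 t, s ∈ T → X s = (y · s) := by
    filter_upwards [hy_mem, hy_mono, eventually_all.2 hy_zero] with s hmem hs hzero hsT
    refine ((hmono s hsT).range_inj hs).1 ((hrange s hsT).trans ?_)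
    exact (range_eq_of_injective_of_encard_eq (hcard s hsT) hs.injective
      fun j => ⟨hmem j, hzero j⟩).symm
  exact ((hy_tendsto k).mono_left nhdsWithin_le_nhds).congr' <| eventually_nhdsWithin_iff.2 <|
    hy_eq.mono fun s hs hsT => (congrFun (hs hsT) k).symm

lemma strictMonoOn_or_strictAntiOn_of_continuousOn_of_injOn {α δ : Type*}
    [ConditionallyCompleteLinearOrder α] [TopologicalSpace α] [OrderTopology α] [DenselyOrdered α]
    [LinearOrder δ] [TopologicalSpace δ] [OrderClosedTopology δ] {s : Set α} [s.OrdConnected]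
    {f : α → δ} (hf : ContinuousOn f s) (hinj : InjOn f s) :
    StrictMonoOn f s ∨ StrictAntiOn f s := by
  obtain rfl | hne := s.eq_empty_or_nonempty
  · exact Or.inl (subsingleton_empty.strictMonoOn f)
  have : Inhabited s := Classical.inhabited_of_nonempty hne.to_subtype
  exact (Continuous.strictMono_of_inj hf.domRestrict hinj.injective).imp
    strictMono_domRestrict.1 strictAntiOn_iff_strictAnti.2

lemma mem_Ioo_of_continuousOn_of_forall_ne {α δ : Type*} [TopologicalSpace α] [LinearOrder δ]
    [TopologicalSpace δ] [OrderClosedTopology δ] {s : Set α} (hs : IsPreconnected s) {f : α → δ}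
    (hf : ContinuousOn f s) {a b : δ} (hne : ∀ t ∈ s, f t ≠ a ∧ f t ≠ b) {t₀ : α} (ht₀ : t₀ ∈ s)
    (h₀ : f t₀ ∈ Ioo a b) {t : α} (ht : t ∈ s) : f t ∈ Ioo a b := by
  have hord : OrdConnected (f '' s) := (hs.image f hf).ordConnected
  have ha : a ∉ f '' s := fun ⟨q, hq, h⟩ => (hne q hq).1 h
  have hb : b ∉ f '' s := fun ⟨q, hq, h⟩ => (hne q hq).2 h
  have hmem {q : α} (hq : q ∈ s) : f q ∈ f '' s := mem_image_of_mem f hq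
  exact ⟨lt_of_not_ge fun h => ha (hord.out (hmem ht) (hmem ht₀) ⟨h, h₀.1.le⟩),
    lt_of_not_ge fun h => hb (hord.out (hmem ht₀) (hmem ht) ⟨h₀.2.le, h⟩)⟩

lemma exactlyOne_eq_or_strictAntiOn_or_strictMonoOn {f : ℝ → ℝ} (hf : ContinuousOn f (Ici 0))
    (hf' : (∀ t, 0 ≤ t → f t = f 0) ∨ InjOn f (Ici 0)) {a b : ℝ} (h₀ : f 0 ∈ Ioo a b)
    (hne : ∀ t ∈ Ici 0, f t ≠ a ∧ f t ≠ b) :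
    ExactlyOne (∀ t, 0 ≤ t → f t = f 0)
      (StrictAntiOn f (Ici 0) ∧ ∀ t, 0 < t → f t ∈ Ioo a (f 0))
      (StrictMonoOn f (Ici 0) ∧ ∀ t, 0 < t → f t ∈ Ioo (f 0) b) := by
  have hmem {t : ℝ} (ht : 0 < t) : f t ∈ Ioo a b :=
    mem_Ioo_of_continuousOn_of_forall_ne isPreconnected_Ici hf hne self_mem_Ici h₀ ht.le
  have hanti (h : StrictAntiOn f (Ici 0)) {t : ℝ} (ht : 0 < t) : f t < f 0 :=
    h self_mem_Ici ht.le ht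
  have hmono (h : StrictMonoOn f (Ici 0)) {t : ℝ} (ht : 0 < t) : f 0 < f t :=
    h self_mem_Ici ht.le ht
  obtain hconst | hinj := hf'
  · exact Or.inl ⟨hconst, fun h => (hanti h.1 one_pos).ne (hconst 1 zero_le_one),
      fun h => (hmono h.1 one_pos).ne' (hconst 1 zero_le_one)⟩
  obtain h | h := strictMonoOn_or_strictAntiOn_of_continuousOn_of_injOn hf hinj
  · exact Or.inr <| Or.inr ⟨fun hconst => (hmono h one_pos).ne' (hconst 1 zero_le_one),
      fun h' => (hmono h one_pos).not_gt (hanti h'.1 one_pos),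
      h, fun t ht => ⟨hmono h ht, (hmem ht).2⟩⟩
  · exact Or.inr <| Or.inl ⟨fun hconst => (hanti h one_pos).ne (hconst 1 zero_le_one),
      ⟨h, fun t ht => ⟨(hmem ht).1, hanti h ht⟩⟩,
      fun h' => (hanti h one_pos).not_gt (hmono h'.1 one_pos)⟩

section Meeting

variable {ι α β : Type*} [TopologicalSpace α] [TopologicalSpace β] [T1Space β]
  {T : Set α} {X : ι → α → β}

lemma eq_of_forall_exists_eq [Finite ι] (hT : IsPreconnected T)
    (hcont : ∀ k, ContinuousOn (X k) T) (hinj : ∀ t ∈ T, Function.Injective (X · t)) {y : β}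
    (hy : ∀ t ∈ T, ∃ k, X k t = y) {i : ι} {s t : α} (hs : s ∈ T) (hi : X i s = y) (ht : t ∈ T) :
    X i t = y := by
  have : PreconnectedSpace T := isPreconnected_iff_preconnectedSpace.1 hT
  have hclosed (k : ι) : IsClosed {q : T | X k q = y} :=
    isClosed_singleton.preimage (hcont k).domRestrict
  have hcompl : {q : T | X i q = y}ᶜ = ⋃ k ∈ ({i}ᶜ : Set ι), {q : T | X k q = y} := by
    ext q
    simp only [mem_compl_iff, mem_ofPred_eq, mem_iUnion, mem_singleton_iff, exists_prop]
    constructor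
    · intro hq
      obtain ⟨k, hk⟩ := hy q q.2
      exact ⟨k, fun hki => hq (hki ▸ hk), hk⟩
    · rintro ⟨k, hki, hk⟩ hq
      exact hki (hinj q q.2 (hk.trans hq.symm))
  have hclopen : IsClopen {q : T | X i q = y} :=
    ⟨hclosed i, isClosed_compl_iff.1 (hcompl ▸ (toFinite _).isClosed_biUnion fun k _ => hclosed k)⟩
  exact eq_univ_iff_forall.1 (hclopen.eq_univ ⟨⟨s, hs⟩, hi⟩) ⟨t, ht⟩

variable [Finite ι] (hT : IsPreconnected T) (hcont : ∀ k, ContinuousOn (X k) T)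
  (hinj : ∀ t ∈ T, Function.Injective (X · t))
  (hmeet : ∀ s ∈ T, ∀ t ∈ T, s ≠ t → ∀ i j, X i s = X j t → ∀ q ∈ T, ∃ k, X k q = X i s)
include hT hcont hinj hmeet

lemma forall_eq_or_injOn_of_meet (k : ι) {s : α} (hs : s ∈ T) :
    (∀ t ∈ T, X k t = X k s) ∨ InjOn (X k) T := by
  refine or_iff_not_imp_right.2 fun hk => ?_
  obtain ⟨p, hp, q, hq, hpq, hne⟩ := by simpa only [InjOn, not_forall, exists_prop] using hk
  have hconst {t : α} (ht : t ∈ T) : X k t = X k p :=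
    eq_of_forall_exists_eq hT hcont hinj (hmeet p hp q hq hne k k hpq) hp rfl ht
  exact fun t ht => (hconst ht).trans (hconst hs).symm

lemma ne_of_meet {i j : ι} (hij : i ≠ j) {s t : α} (hs : s ∈ T) (ht : t ∈ T) : X i s ≠ X j t := by
  intro h
  obtain rfl | hst := eq_or_ne s t
  · exact hij (hinj s hs h)
  · have hconst : X i t = X i s :=
      eq_of_forall_exists_eq hT hcont hinj (hmeet s hs t ht hst i j h) hs rfl ht
    exact hij (hinj t ht (hconst.trans h))

end Meeting

lemma eq_zero_and_eq_zero_of_cosh_mul_add_sinh_mul_eq_zero {s t c d : ℝ} (hst : s ≠ t)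
    (hs : Real.cosh s * c + Real.sinh s * d = 0) (ht : Real.cosh t * c + Real.sinh t * d = 0) :
    c = 0 ∧ d = 0 := by
  have hdet : Real.sinh (t - s) ≠ 0 := Real.sinh_ne_zero.2 (sub_ne_zero.2 hst.symm)
  rw [Real.sinh_sub] at hdet
  exact ⟨(mul_eq_zero.1 (by linear_combination Real.sinh t * hs - Real.sinh s * ht :
      (Real.sinh t * Real.cosh s - Real.cosh t * Real.sinh s) * c = 0)).resolve_left hdet,
    (mul_eq_zero.1 (by linear_combination Real.cosh s * ht - Real.cosh t * hs :
      (Real.sinh t * Real.cosh s - Real.cosh t * Real.sinh s) * d = 0)).resolve_left hdet⟩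

end MovingZeros

section Labelling

variable {α : Type*} {m : ℕ}

lemma forall_mem_Icc_one_iff {P : ℕ → Prop} :
    (∀ k ∈ Finset.Icc 1 m, P k) ↔ ∀ i : Fin m, P (i + 1) := by
  refine ⟨fun h i => h _ (Finset.mem_Icc.2 ⟨by omega, i.isLt⟩), fun h k hk => ?_⟩
  obtain ⟨hk1, hkm⟩ := Finset.mem_Icc.1 hk
  obtain ⟨k, rfl⟩ := Nat.exists_eq_add_of_le' hk1
  exact h ⟨k, hkm⟩

/-- The one-based sequence `y₁, …, yₘ` extended by the boundary values `y₀ = a` and `yₘ₊₁ = b`;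
the value is `b` beyond that. -/
def withEndpoints (a b : α) (y : Fin m → α) : ℕ → α
  | 0 => a
  | k + 1 => if h : k < m then y ⟨k, h⟩ else b

lemma withEndpoints_succ (a b : α) (y : Fin m → α) (k : Fin m) :
    withEndpoints a b y (k + 1) = y k := dif_pos k.isLt

lemma withEndpoints_succ_of_le (a b : α) (y : Fin m → α) {k : ℕ} (hk : m ≤ k) :
    withEndpoints a b y (k + 1) = b := dif_neg hk.not_gt

lemma image_withEndpoints_Icc (a b : α) (y : Fin m → α) :
    withEndpoints a b y '' Set.Icc 1 m = Set.range y := by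
  ext z
  constructor
  · rintro ⟨_ | k, ⟨hk, hkm⟩, rfl⟩
    · omega
    · exact ⟨⟨k, hkm⟩, (withEndpoints_succ a b y ⟨k, hkm⟩).symm⟩
  · rintro ⟨k, rfl⟩
    exact ⟨k + 1, ⟨by omega, k.isLt⟩, withEndpoints_succ a b y k⟩

lemma withEndpoints_eq_or_eq_or_exists_eq {a b : α} {y : Fin m → α} {j : ℕ} {k : Fin m}
    (hj : j ≠ k + 1) :
    withEndpoints a b y j = a ∨ withEndpoints a b y j = b ∨
      ∃ i, i ≠ k ∧ withEndpoints a b y j = y i := by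
  obtain _ | j := j
  · exact Or.inl rfl
  · by_cases h : j < m
    · exact Or.inr (Or.inr ⟨⟨j, h⟩, fun hjk => hj (by simp [← hjk]), dif_pos h⟩)
    · exact Or.inr (Or.inl (dif_neg h))

lemma withEndpoints_lt_withEndpoints_succ [Preorder α] {a b : α} {y : Fin m → α} (hab : a < b)
    (hy : StrictMono y) (hmem : ∀ k, y k ∈ Set.Ioo a b) {k : ℕ} (hk : k ≤ m) :
    withEndpoints a b y k < withEndpoints a b y (k + 1) := by
  obtain rfl | hk := hk.eq_or_lt
  · rw [withEndpoints_succ_of_le a b y le_rfl]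
    obtain _ | k := k
    · exact hab
    · exact (withEndpoints_succ a b y (Fin.last k)).trans_lt (hmem _).2
  · rw [withEndpoints_succ a b y ⟨k, hk⟩]
    obtain _ | k := k
    · exact (hmem _).1
    · rw [withEndpoints_succ a b y ⟨k, by omega⟩]
      exact hy (by simp)

end Labelling

section MainTheorem

variable {V : Type} [Fintype V] [DecidableEq V]

lemma isingCos_add_single_eq_zero_of_ne {J : Sym2 V → ℝ} {e : Sym2 V} {s t x : ℝ} (hst : s ≠ t)
    (hs : isingCos (J + Pi.single e s) x = 0) (ht : isingCos (J + Pi.single e t) x = 0) (q : ℝ) :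
    isingCos (J + Pi.single e q) x = 0 := by
  rw [isingCos_add_single] at hs ht ⊢
  obtain ⟨hc, hd⟩ := eq_zero_and_eq_zero_of_cosh_mul_add_sinh_mul_eq_zero hst hs ht
  rw [hc, hd, mul_zero, mul_zero, add_zero]

lemma contDiff_isingCos_add_single (J : Sym2 V → ℝ) (e : Sym2 V) :
    ContDiff ℝ 1 (Function.uncurry fun t x => isingCos (J + Pi.single e t) x) := by
  have hC := (contDiff_isingCos J).comp (contDiff_snd (E := ℝ))
  have hD := (contDiff_isingEdgeCos J e).comp (contDiff_snd (E := ℝ))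
  simp only [Function.uncurry_def, isingCos_add_single]
  exact ((Real.contDiff_cosh.comp contDiff_fst).mul hC).add
    ((Real.contDiff_sinh.comp contDiff_fst).mul hD)

theorem exists_continuousOn_zeros_isingCos_add_single {J : Sym2 V → ℝ} (hJ : 0 ≤ J)
    (hconn : (positiveGraph J).Connected) (e : Sym2 V) :
    ∃ X : Fin (Fintype.card V / 2) → ℝ → ℝ, (∀ k, ContinuousOn (X k) (Set.Ici 0)) ∧
      (∀ t ∈ Set.Ici 0, StrictMono (X · t)) ∧ ∀ t ∈ Set.Ici 0,
        Set.range (X · t) =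
          {x | x ∈ Set.Ioo 0 (π / 2) ∧ isingCos (J + Pi.single e t) x = 0} := by
  have hle {t : ℝ} (ht : 0 ≤ t) : J ≤ J + Pi.single e t :=
    le_add_of_nonneg_right (Pi.single_nonneg.2 ht)
  exact exists_continuousOn_strictMono_range_eq_zeros (contDiff_isingCos_add_single J e) isOpen_Ioo
    (fun t ht => encard_setOf_isingCos_eq_zero (hJ.trans (hle ht))
      (connected_positiveGraph_mono (hle ht) hconn))
    fun t ht _ => deriv_isingCos_ne_zero (hJ.trans (hle ht))
      (connected_positiveGraph_mono (hle ht) hconn)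

theorem exactlyOne_of_range_eq_zeros_isingCos_add_single {J : Sym2 V → ℝ} {e : Sym2 V} {m : ℕ}
    {X : Fin m → ℝ → ℝ} (hcont : ∀ k, ContinuousOn (X k) (Set.Ici 0))
    (hmono : ∀ t ∈ Set.Ici 0, StrictMono (X · t))
    (hrange : ∀ t ∈ Set.Ici 0, Set.range (X · t) =
      {x | x ∈ Set.Ioo 0 (π / 2) ∧ isingCos (J + Pi.single e t) x = 0}) (k : Fin m) :
    ExactlyOne (∀ t, 0 ≤ t → X k t = X k 0)
      (StrictAntiOn (X k) (Set.Ici 0) ∧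
        ∀ t, 0 < t → X k t ∈ Set.Ioo (withEndpoints 0 (π / 2) (X · 0) k) (X k 0))
      (StrictMonoOn (X k) (Set.Ici 0) ∧
        ∀ t, 0 < t → X k t ∈ Set.Ioo (X k 0) (withEndpoints 0 (π / 2) (X · 0) (k + 2))) := by
  have hmem {t : ℝ} (ht : t ∈ Set.Ici 0) (i : Fin m) :
      X i t ∈ {x | x ∈ Set.Ioo 0 (π / 2) ∧ isingCos (J + Pi.single e t) x = 0} :=
    hrange t ht ▸ Set.mem_range_self i
  have hinj (t : ℝ) (ht : t ∈ Set.Ici 0) : Function.Injective (X · t) := (hmono t ht).injective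
  have hmeet : ∀ s ∈ Set.Ici 0, ∀ t ∈ Set.Ici 0, s ≠ t → ∀ i j, X i s = X j t →
      ∀ q ∈ Set.Ici 0, ∃ l, X l q = X i s := fun s hs t ht hst i j hij q hq =>
    (hrange q hq).ge ⟨(hmem hs i).1,
      isingCos_add_single_eq_zero_of_ne hst (hmem hs i).2 (hij ▸ (hmem ht j).2) q⟩
  have hne {j : ℕ} (hj : j ≠ k + 1) {t : ℝ} (ht : t ∈ Set.Ici 0) :
      X k t ≠ withEndpoints 0 (π / 2) (X · 0) j := by
    obtain h | h | ⟨i, hik, h⟩ := withEndpoints_eq_or_eq_or_exists_eq hj <;> rw [h]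
    · exact (hmem ht k).1.1.ne'
    · exact (hmem ht k).1.2.ne
    · exact ne_of_meet isPreconnected_Ici hcont hinj hmeet hik.symm ht Set.self_mem_Ici
  have hlt {j : ℕ} (hj : j ≤ m) := withEndpoints_lt_withEndpoints_succ (half_pos Real.pi_pos)
    (hmono 0 Set.self_mem_Ici) (fun i => (hmem Set.self_mem_Ici i).1) hj
  refine exactlyOne_eq_or_strictAntiOn_or_strictMonoOn (hcont k)
    (forall_eq_or_injOn_of_meet isPreconnected_Ici hcont hinj hmeet k Set.self_mem_Ici) ?_
    fun t ht => ⟨hne (by omega) ht, hne (by omega) ht⟩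
  rw [← withEndpoints_succ 0 (π / 2) (X · 0) k]
  exact ⟨hlt k.isLt.le, hlt k.isLt⟩

theorem stmt0_general (E : Finset (Sym2 V)) (J : Sym2 V → ℝ) (u₀ v₀ : V)
    (hferro : ∀ e ∈ E, 0 ≤ J e)
    (hconn : (SimpleGraph.fromEdgeSet {e : Sym2 V | e ∈ E ∧ 0 < J e}).Connected)
    (n : ℕ) (hn : n = Fintype.card V) :
    ∃ x : ℕ → ℝ → ℝ,
      (∀ k ∈ Finset.Icc 1 (n / 2), ContinuousOn (x k) (Set.Ici 0)) ∧
      (∀ t : ℝ, 0 ≤ t →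
        (∀ k ∈ Finset.Icc 1 (n / 2), 0 < x k t ∧ x k t < π / 2) ∧
        (∀ k, 1 ≤ k → k < n / 2 → x k t < x (k + 1) t) ∧
        {z : ℝ | z ∈ Set.Ioo 0 (π / 2) ∧ IsingZ E J u₀ v₀ t z = 0}
          = (fun k => x k t) '' Set.Icc 1 (n / 2)) ∧
      (∀ k ∈ Finset.Icc 1 (n / 2),
        ExactlyOne
          (∀ t : ℝ, 0 ≤ t → x k t = x k 0)
          (StrictAntiOn (x k) (Set.Ici 0) ∧
            ∀ t : ℝ, 0 < t →
              x k t ∈ Set.Ioo (if k = 1 then 0 else x (k - 1) 0) (x k 0))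
          (StrictMonoOn (x k) (Set.Ici 0) ∧
            ∀ t : ℝ, 0 < t →
              x k t ∈ Set.Ioo (x k 0) (if k = n / 2 then π / 2 else x (k + 1) 0))) := by
  subst hn
  have hJ : 0 ≤ (E : Set (Sym2 V)).indicator J := Set.indicator_nonneg hferro
  rw [← positiveGraph_indicator] at hconn
  obtain ⟨X, hcont, hmono, hrange⟩ :=
    exists_continuousOn_zeros_isingCos_add_single hJ hconn s(u₀, v₀)
  have hmem {t : ℝ} (ht : 0 ≤ t) (i) : X i t ∈ Set.Ioo 0 (π / 2) :=
    ((hrange t ht).le (Set.mem_range_self i)).1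
  have hlt {t : ℝ} (ht : 0 ≤ t) {k} (hk : k ≤ Fintype.card V / 2) :=
    withEndpoints_lt_withEndpoints_succ (half_pos Real.pi_pos) (hmono t ht) (hmem ht) hk
  refine ⟨fun k t => withEndpoints 0 (π / 2) (X · t) k, ?_,
    fun t ht => ⟨?_, fun k _ hk => hlt ht hk.le, ?_⟩, ?_⟩
  · simpa only [forall_mem_Icc_one_iff, withEndpoints_succ] using hcont
  · simpa only [forall_mem_Icc_one_iff, withEndpoints_succ, Set.mem_Ioo] using hmem ht
  · rw [image_withEndpoints_Icc, hrange t ht]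
    simp only [isingZ_eq_ofReal_isingCos, Complex.ofReal_eq_zero]
  · refine forall_mem_Icc_one_iff.2 fun i => ?_
    have hleft (h : (i : ℕ) + 1 = 1) : 0 = withEndpoints 0 (π / 2) (X · 0) i := by
      rw [Nat.succ_injective h, withEndpoints]
    have hright (h : (i : ℕ) + 1 = Fintype.card V / 2) :
        π / 2 = withEndpoints 0 (π / 2) (X · 0) (i + 2) :=
      (withEndpoints_succ_of_le 0 (π / 2) (X · 0) h.ge).symm
    simp only [Nat.add_sub_cancel, ite_eq_right_iff.2 hleft, ite_eq_right_iff.2 hright,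
      withEndpoints_succ]
    exact exactlyOne_of_range_eq_zeros_isingCos_add_single hcont hmono hrange i

end MainTheorem

theorem stmt0 {V : Type} [Fintype V] [DecidableEq V]
    (E : Finset (Sym2 V)) (J : Sym2 V → ℝ) (u₀ v₀ : V)
    (hE : s(u₀, v₀) ∈ E)
    (hferro : ∀ e ∈ E, 0 ≤ J e)
    (hconn : (SimpleGraph.fromEdgeSet {e : Sym2 V | e ∈ E ∧ 0 < J e}).Connected)
    (n : ℕ) (hn : n = Fintype.card V) (heven : Even n) :
    ∃ x : ℕ → ℝ → ℝ,
      (∀ k ∈ Finset.Icc 1 (n / 2), ContinuousOn (x k) (Set.Ici 0)) ∧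
      (∀ t : ℝ, 0 ≤ t →
        (∀ k ∈ Finset.Icc 1 (n / 2), 0 < x k t ∧ x k t < π / 2) ∧
        (∀ k, 1 ≤ k → k < n / 2 → x k t < x (k + 1) t) ∧
        {z : ℝ | z ∈ Set.Ioo 0 (π / 2) ∧ IsingZ E J u₀ v₀ t z = 0}
          = (fun k => x k t) '' Set.Icc 1 (n / 2)) ∧
      (∀ k ∈ Finset.Icc 1 (n / 2),
        ExactlyOne
          (∀ t : ℝ, 0 ≤ t → x k t = x k 0)
          (StrictAntiOn (x k) (Set.Ici 0) ∧
            ∀ t : ℝ, 0 < t →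
              x k t ∈ Set.Ioo (if k = 1 then 0 else x (k - 1) 0) (x k 0))
          (StrictMonoOn (x k) (Set.Ici 0) ∧
            ∀ t : ℝ, 0 < t →
              x k t ∈ Set.Ioo (x k 0) (if k = n / 2 then π / 2 else x (k + 1) 0))) :=
  stmt0_general E J u₀ v₀ hferro hconn n hn
end

section
/- Suppose that n is odd and that the subgraph G_{>0} is connected, and that J is ferromagnetic. Then Z_{G,t}(π/2) = 0 for every t ≥ 0, and there exist continuous functions x_1, …, x_{(n−1)/2} : [0,∞) → ℝ such that for every t ≥ 0 one has 0 < x_1(t) < … < x_{(n−1)/2}(t) < π/2 and {x ∈ (0,π/2) : Z_{G,t}(x) = 0} = {x_1(t), …, x_{(n−1)/2}(t)}; moreover, setting x_0(0) := 0 and x_{(n+1)/2}(0) := π/2, for each k ∈ {1, …, (n−1)/2} exactly one of the following three cases occurs: (a) x_k(t) = x_k(0) for every t ∈ [0,∞); (b) x_k is strictly decreasing on [0,∞) and x_k(t) ∈ (x_{k−1}(0), x_k(0)) for every t ∈ (0,∞); (c) x_k is strictly increasing on [0,∞) and x_k(t) ∈ (x_k(0), x_{k+1}(0)) for every t ∈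 (0,∞). -/
open scoped Real

/- The minus spins of a configuration with a plus spin at a fixed vertex are counted by a real
polynomial of degree less than the number `n` of vertices, which by a Lee–Yang argument has no zero
on the closed unit disc. By spin-flip symmetry the partition function is, up to a positive factor,
the real part of this polynomial along the unit circle, rotated by `exp (i n x)`. The argument of
that curve increases strictly, from `0` at `x = 0` to `n π / 2` at `x = π / 2`, so the zeros are the
points where it is an odd multiple of `π / 2`, and they depend continuously on `t`. Since the
partition function is a combination of `exp t` and `exp (-t)` with coefficients depending on `x`
only, a point which is a zero at two distinct times is a zero at all times: each zero is constant or
moves injectively, and it cannot cross the initial position of a neighbouring zero. -/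

section CutPolynomial

variable {V : Type*} [DecidableEq V] {R : Type*} [CommSemiring R]

/-- The cut polynomial of `U`: each `S ⊆ U` contributes the product of the activities `z` over `S`,
of the activities `y` over `U \ S` and of the edge activities `a` across the cut. Carrying both `y`
and `z` makes the polynomial homogeneous and, up to transposing `a`, symmetric. -/
def cutPoly (a : Matrix V V R) (U : Finset V) (y z : V → R) : R :=
  ∑ S ∈ U.powerset, (∏ u ∈ S, z u) * (∏ w ∈ U \ S, y w) * ∏ u ∈ S, ∏ w ∈ U \ S, a u w

lemma map_cutPoly {R' : Type*} [CommSemiring R'] (f : R →+* R') (a : Matrix V V R)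
    (U : Finset V) (y z : V → R) :
    f (cutPoly a U y z) = cutPoly (a.map f) U (f ∘ y) (f ∘ z) := by
  simp [cutPoly]

lemma cutPoly_transpose (a : Matrix V V R) (U : Finset V) (y z : V → R) :
    cutPoly a.transpose U y z = cutPoly a U z y := by
  refine Finset.sum_nbij' (U \ ·) (U \ ·) (by simp) (by simp)
    (fun S hS => by simpa using hS) (fun S hS => by simpa using hS) fun S hS => ?_
  have hUS : U \ (U \ S) = S := by simpa using hS
  simp only [hUS, Matrix.transpose_apply]
  rw [Finset.prod_comm, mul_comm (∏ u ∈ S, z u)]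

lemma prod_mul_cutPoly (a : Matrix V V R) (U : Finset V) (c y z : V → R) :
    (∏ u ∈ U, c u) * cutPoly a U y z = cutPoly a U (c * y) (c * z) := by
  simp only [cutPoly, Finset.mul_sum, Pi.mul_apply, Finset.prod_mul_distrib]
  refine Finset.sum_congr rfl fun S hS => ?_
  rw [← Finset.prod_sdiff (Finset.mem_powerset.1 hS)]
  ring

lemma cutPoly_insert (a : Matrix V V R) {U : Finset V} {v : V} (hv : v ∉ U) (y z : V → R) :
    cutPoly a (insert v U) y z =
      y v * cutPoly a U y (a.transpose v * z) + z v * cutPoly a U (a v * y) z := by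
  rw [cutPoly, Finset.sum_powerset_insert hv, cutPoly, cutPoly, Finset.mul_sum, Finset.mul_sum]
  congr 1 <;> refine Finset.sum_congr rfl fun S hS => ?_
  all_goals
    have hvS : v ∉ S := fun h => hv (Finset.mem_powerset.1 hS h)
    have hvUS : v ∉ U \ S := fun h => hv (Finset.mem_sdiff.1 h).1
  · simp only [Finset.insert_sdiff_of_notMem _ hvS, Finset.prod_insert hvUS, Pi.mul_apply,
      Matrix.transpose_apply, Finset.prod_mul_distrib]
    ring
  · have hsdiff : insert v U \ insert v S = U \ S := by grind
    simp only [hsdiff, Finset.prod_insert hvS, Pi.mul_apply, Finset.prod_mul_distrib]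
    ring

lemma cutPoly_eq_add_update (a : Matrix V V R) {U : Finset V} {v : V} (hv : v ∈ U) (y z : V → R) :
    cutPoly a U y z =
      cutPoly a U y (Function.update z v 0) + cutPoly a U (Function.update y v 0) z := by
  simp only [cutPoly, ← Finset.sum_add_distrib]
  refine Finset.sum_congr rfl fun S _ => ?_
  by_cases hvS : v ∈ S
  · have hvUS : v ∉ U \ S := fun h => (Finset.mem_sdiff.1 h).2 hvS
    rw [Finset.prod_update_of_mem hvS, Finset.prod_update_of_notMem hvUS]
    ring
  · have hvUS : v ∈ U \ S := Finset.mem_sdiff.2 ⟨hv, hvS⟩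
    rw [Finset.prod_update_of_notMem hvS, Finset.prod_update_of_mem hvUS]
    ring

end CutPolynomial

section LeeYang

open ComplexConjugate

variable {V : Type*} [DecidableEq V] {a : Matrix V V ℂ} {U : Finset V}

lemma conj_cutPoly (ha : a.IsHermitian) (U : Finset V) (y z : V → ℂ) :
    conj (cutPoly a U y z) = cutPoly a U (star z) (star y) := by
  have hmap : a.map (starRingEnd ℂ) = a.transpose := Matrix.ext fun u w => ha.apply w u
  rw [map_cutPoly, hmap, cutPoly_transpose]
  rfl

lemma prod_mul_conj_cutPoly (ha : a.IsHermitian) {z : V → ℂ} (hz : ∀ u ∈ U, ‖z u‖ = 1)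
    (b : V → ℂ) :
    (∏ u ∈ U, z u) * conj (cutPoly a U 1 (star b * z)) = cutPoly a U b z := by
  have hcongr : ∀ u ∈ U, (z * star (star b * z)) u = b u := fun u hu => by
    have hzu : z u * star (z u) = 1 := by
      rw [← starRingEnd_apply, Complex.mul_conj', hz u hu]
      norm_num
    simp only [Pi.mul_apply, Pi.star_apply, star_mul, star_star]
    linear_combination b u * hzu
  rw [conj_cutPoly ha, prod_mul_cutPoly, star_one, mul_one]
  refine Finset.sum_congr rfl fun S _ => ?_
  rw [Finset.prod_congr rfl fun u hu => hcongr u (Finset.mem_sdiff.1 hu).1]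

lemma norm_cutPoly_of_norm_eq_one (ha : a.IsHermitian) {z : V → ℂ} (hz : ∀ u ∈ U, ‖z u‖ = 1)
    (b : V → ℂ) :
    ‖cutPoly a U b z‖ = ‖cutPoly a U 1 (star b * z)‖ := by
  rw [← prod_mul_conj_cutPoly ha hz, norm_mul, norm_prod, Finset.prod_eq_one hz, one_mul,
    RCLike.norm_conj]

lemma norm_le_of_forall_norm_eq_one_norm_le {f : (V → ℂ) → ℂ} {C : ℝ}
    (hf : ∀ z : V → ℂ, (∀ u ∈ U, ‖z u‖ ≤ 1) → ∀ k ∈ U,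
      DifferentiableOn ℂ (fun ζ => f (Function.update z k ζ)) (Metric.closedBall 0 1))
    (hC : ∀ z : V → ℂ, (∀ u ∈ U, ‖z u‖ = 1) → ‖f z‖ ≤ C) {z : V → ℂ} (hz : ∀ u ∈ U, ‖z u‖ ≤ 1) :
    ‖f z‖ ≤ C := by
  suffices H : ∀ K ⊆ U, ∀ z : V → ℂ, (∀ u ∈ U, ‖z u‖ ≤ 1) → (∀ u ∈ U \ K, ‖z u‖ = 1) → ‖f z‖ ≤ C
    from H U subset_rfl z hz (by simp)
  intro K
  induction K using Finset.induction_on with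
  | empty => exact fun _ z _ hz => hC z (by simpa using hz)
  | insert k K _ ih =>
    intro hK z hz hz1
    have hkU : k ∈ U := hK (Finset.mem_insert_self k K)
    rw [← Function.update_eq_self k z]
    refine Complex.norm_le_of_forall_mem_frontier_norm_le (U := Metric.ball (0 : ℂ) 1)
      (f := fun ζ => f (Function.update z k ζ)) Metric.isBounded_ball
      (DifferentiableOn.diffContOnCl ?_) (fun ζ hζ => ?_) ?_
    · rw [closure_ball _ one_ne_zero]
      exact hf z hz k hkU
    · rw [frontier_ball _ one_ne_zero, mem_sphere_zero_iff_norm] at hζ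
      refine ih ((Finset.subset_insert k K).trans hK) _ (fun u hu => ?_) fun u hu => ?_
      · rcases eq_or_ne u k with rfl | huk
        · simpa using hζ.le
        · simpa [huk] using hz u hu
      · rcases eq_or_ne u k with rfl | huk
        · simpa using hζ
        · simpa [huk] using hz1 u (by grind)
    · rw [closure_ball _ one_ne_zero, mem_closedBall_zero_iff]
      exact hz k hkU

lemma differentiable_cutPoly_update (a : Matrix V V ℂ) (U : Finset V) (b c z : V → ℂ) (k : V) :
    Differentiable ℂ fun ζ => cutPoly a U b (c * Function.update z k ζ) := by
  have hupdate (u : V) : Differentiable ℂ fun ζ : ℂ => Function.update z k ζ u := by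
    rcases eq_or_ne u k with rfl | huk
    · simp
    · simp [huk]
  simp only [cutPoly, Pi.mul_apply]
  fun_prop

lemma norm_cutPoly_le_of_ne_zero (ha : a.IsHermitian) {b : V → ℂ}
    (hne : ∀ z : V → ℂ, (∀ u ∈ U, ‖z u‖ ≤ 1) → cutPoly a U 1 (star b * z) ≠ 0)
    {z : V → ℂ} (hz : ∀ u ∈ U, ‖z u‖ ≤ 1) :
    ‖cutPoly a U b z‖ ≤ ‖cutPoly a U 1 (star b * z)‖ := by
  suffices H : ‖cutPoly a U b z / cutPoly a U 1 (star b * z)‖ ≤ 1 by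
    rwa [norm_div, div_le_one (norm_pos_iff.2 (hne z hz))] at H
  refine norm_le_of_forall_norm_eq_one_norm_le
    (f := fun z => cutPoly a U b z / cutPoly a U 1 (star b * z)) (fun z hz k hk => ?_)
    (fun z hz => ?_) hz
  · refine DifferentiableOn.div ?_ (differentiable_cutPoly_update a U 1 _ z k).differentiableOn
      fun ζ hζ => hne _ fun u hu => ?_
    · simpa using (differentiable_cutPoly_update a U b 1 z k).differentiableOn
    · rcases eq_or_ne u k with rfl | huk
      · simpa using hζ
      · simpa [huk] using hz u hu
  · rw [norm_div, norm_cutPoly_of_norm_eq_one ha hz]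
    exact div_self_le_one _

lemma norm_cutPoly_le (ha : a.IsHermitian)
    (hne : ∀ z : V → ℂ, (∀ u ∈ U, ‖z u‖ < 1) → cutPoly a U 1 z ≠ 0)
    {b z : V → ℂ} (hb : ∀ u ∈ U, ‖b u‖ ≤ 1) (hz : ∀ u ∈ U, ‖z u‖ ≤ 1) :
    ‖cutPoly a U b z‖ ≤ ‖cutPoly a U 1 (star b * z)‖ := by
  have hlt : ∀ r ∈ Set.Ioo (0 : ℝ) 1, ‖cutPoly a U ((r : ℂ) • b) z‖
      ≤ ‖cutPoly a U 1 (star ((r : ℂ) • b) * z)‖ := by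
    refine fun r hr => norm_cutPoly_le_of_ne_zero ha (fun y hy => hne _ fun u hu => ?_) hz
    have hby : ‖b u‖ * ‖y u‖ ≤ 1 := mul_le_one₀ (hb u hu) (norm_nonneg _) (hy u hu)
    simpa [abs_of_pos hr.1, mul_assoc] using
      (mul_le_of_le_one_right hr.1.le hby).trans_lt hr.2
  have hone : (1 : ℝ) ∈ closure (Set.Ioo (0 : ℝ) 1) := by simp [closure_Ioo]
  have hle := le_on_closure hlt
    (by simp only [cutPoly, Pi.smul_apply, smul_eq_mul]; fun_prop)
    (by simp only [cutPoly, Pi.smul_apply, Pi.mul_apply, Pi.star_apply, smul_eq_mul]; fun_prop)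
    hone
  simpa using hle

lemma cutPoly_insert_ne_zero (ha : a.IsHermitian) {v : V} (hv : v ∉ U)
    (hne : ∀ y : V → ℂ, (∀ u ∈ U, ‖y u‖ < 1) → cutPoly a U 1 y ≠ 0)
    (hav : ∀ u ∈ U, ‖a v u‖ ≤ 1) {z : V → ℂ} (hz : ∀ u ∈ U, ‖z u‖ ≤ 1) (hzv : ‖z v‖ < 1)
    (h0 : cutPoly a U 1 (a.transpose v * z) ≠ 0) :
    cutPoly a (insert v U) 1 z ≠ 0 := by
  have hstar : star (a v) = a.transpose v := funext fun u => ha.apply u v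
  have hle : ‖cutPoly a U (a v) z‖ ≤ ‖cutPoly a U 1 (a.transpose v * z)‖ := by
    rw [← hstar]
    exact norm_cutPoly_le ha hne hav hz
  have hlt : ‖z v * cutPoly a U (a v) z‖ < ‖cutPoly a U 1 (a.transpose v * z)‖ := by
    rw [norm_mul]
    exact (mul_le_mul_of_nonneg_left hle (norm_nonneg _)).trans_lt
      (mul_lt_of_lt_one_left (norm_pos_iff.2 h0) hzv)
  rw [cutPoly_insert a hv, Pi.one_apply, one_mul, mul_one]
  intro hadd
  rw [eq_neg_of_add_eq_zero_left hadd, norm_neg] at hlt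
  exact hlt.false

theorem cutPoly_ne_zero (ha : a.IsHermitian) (ha1 : ∀ u w, ‖a u w‖ ≤ 1) (U : Finset V)
    (z : V → ℂ) (hz : ∀ u ∈ U, ‖z u‖ ≤ 1)
    (hcut : ∀ S ⊆ U, S.Nonempty → (∀ u ∈ S, ‖z u‖ = 1) → ∃ u ∈ S, ∃ w ∈ U \ S, ‖a u w‖ < 1) :
    cutPoly a U 1 z ≠ 0 := by
  induction U using Finset.strongInduction generalizing z with
  | H U ih =>
  rcases U.eq_empty_or_nonempty with rfl | hU
  · simp [cutPoly]
  obtain ⟨v, hvU, hzv⟩ : ∃ v ∈ U, ‖z v‖ < 1 := by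
    by_contra! h
    obtain ⟨u, _, w, hw, _⟩ := hcut U subset_rfl hU fun u hu => le_antisymm (hz u hu) (h u hu)
    simp at hw
  obtain ⟨U, hv, rfl⟩ : ∃ U' : Finset V, v ∉ U' ∧ insert v U' = U :=
    ⟨U.erase v, by simp, Finset.insert_erase hvU⟩
  have hUv : U ⊂ insert v U := Finset.ssubset_insert hv
  have hzU : ∀ u ∈ U, ‖z u‖ ≤ 1 := fun u hu => hz u (Finset.mem_insert_of_mem hu)
  have hnorm (u : V) : ‖(a.transpose v * z) u‖ = ‖a u v‖ * ‖z u‖ := norm_mul _ _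
  refine cutPoly_insert_ne_zero ha hv (fun y hy => ?_) (fun u _ => ha1 v u) hzU hzv ?_
  · refine ih U hUv y (fun u hu => (hy u hu).le) ?_
    rintro S hS ⟨u, hu⟩ hS1
    exact absurd (hS1 u hu) (hy u (hS hu)).ne
  refine ih U hUv _ (fun u hu => ?_) fun S hS hSne hS1 => ?_
  · rw [hnorm]
    exact mul_le_one₀ (ha1 u v) (norm_nonneg _) (hzU u hu)
  have hone : ∀ u ∈ S, ‖a u v‖ = 1 ∧ ‖z u‖ = 1 := fun u hu => by
    have hprod := hS1 u hu
    rw [hnorm] at hprod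
    have hau := ha1 u v
    have hzu := hzU u (hS hu)
    constructor <;> nlinarith [norm_nonneg (a u v), norm_nonneg (z u)]
  obtain ⟨u, hu, w, hw, hlt⟩ := hcut S (hS.trans hUv.subset) hSne fun u hu => (hone u hu).2
  have hwv : w ≠ v := by
    rintro rfl
    exact hlt.ne (hone u hu).1
  exact ⟨u, hu, w, by grind, hlt⟩

end LeeYang

section Phase

open intervalIntegral

/-- The argument of a nonvanishing curve `G`, followed continuously from the value `0` at `0`. -/
noncomputable def phase (G : ℝ → ℂ) (x : ℝ) : ℝ := ∫ s in (0 : ℝ)..x, (logDeriv G s).im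

variable {G : ℝ → ℂ}

lemma phase_zero (G : ℝ → ℂ) : phase G 0 = 0 := integral_same

lemma strictMono_phase (hc : Continuous (logDeriv G)) (hpos : ∀ x, 0 < (logDeriv G x).im) :
    StrictMono (phase G) := by
  refine strictMono_of_deriv_pos fun x => ?_
  unfold phase
  rw [(Complex.continuous_im.comp hc).deriv_integral (fun s => (logDeriv G s).im)]
  exact hpos x

lemma continuous_uncurry_phase {T : Type*} [TopologicalSpace T] {G : T → ℝ → ℂ}
    (hG : Continuous (Function.uncurry fun t => logDeriv (G t))) :
    Continuous (Function.uncurry fun t => phase (G t)) :=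
  continuous_parametric_intervalIntegral_of_continuous
    (f := fun (p : T × ℝ) s => (logDeriv (G p.1) s).im)
    (Complex.continuous_im.comp (hG.comp₂ (by fun_prop) continuous_snd)) continuous_snd

lemma eq_mul_exp_integral_logDeriv (hG : Differentiable ℝ G) (hne : ∀ x, G x ≠ 0)
    (hc : Continuous (logDeriv G)) (x : ℝ) :
    G x = G 0 * Complex.exp (∫ s in (0 : ℝ)..x, logDeriv G s) := by
  have hderiv (x : ℝ) :
      HasDerivAt (fun x => G x * Complex.exp (-∫ s in (0 : ℝ)..x, logDeriv G s)) 0 x := by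
    have hint := (hc.integral_hasStrictDerivAt 0 x).hasDerivAt
    refine ((hG x).hasDerivAt.mul hint.neg.cexp).congr_deriv ?_
    rw [logDeriv_apply]
    field_simp [hne x]
    ring
  have hconst := is_const_of_deriv_eq_zero (fun x => (hderiv x).differentiableAt)
    (fun x => (hderiv x).deriv) x 0
  simp only [integral_same, neg_zero, Complex.exp_zero, mul_one] at hconst
  rw [← hconst, mul_assoc, ← Complex.exp_add, neg_add_cancel, Complex.exp_zero, mul_one]

lemma re_eq_zero_iff_cos_phase_eq_zero (hG : Differentiable ℝ G) (hne : ∀ x, G x ≠ 0)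
    (hc : Continuous (logDeriv G)) (h0 : (G 0).im = 0) (x : ℝ) :
    (G x).re = 0 ↔ Real.cos (phase G x) = 0 := by
  have hphase : (∫ s in (0 : ℝ)..x, logDeriv G s).im = phase G x :=
    (intervalIntegral_im (hc.intervalIntegrable 0 x)).symm
  have hre : (G 0).re ≠ 0 := fun h => hne 0 (Complex.ext h h0)
  rw [eq_mul_exp_integral_logDeriv hG hne hc x, Complex.mul_re, h0, zero_mul, sub_zero,
    Complex.exp_re, hphase]
  simp [hre]

end Phase

section TwistedEval

open Polynomial ComplexConjugate

/-- The logarithmic derivative `z * Q' z / Q z` along rays from the origin. -/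
noncomputable def radialLogDeriv (Q : ℝ[X]) (z : ℂ) : ℂ := z * aeval z (derivative Q) / aeval z Q

/-- The values of the real polynomial `Q` along the unit circle, rotated so that a self-reciprocal
polynomial of degree `n` would become real-valued. -/
noncomputable def twistedEval (n : ℕ) (Q : ℝ[X]) (x : ℝ) : ℂ :=
  Complex.exp (Complex.I * x * n) * aeval (Complex.exp (-2 * Complex.I * x)) Q

variable {n : ℕ} {Q : ℝ[X]} {z : ℂ}

lemma radialLogDeriv_conj (Q : ℝ[X]) (z : ℂ) :
    radialLogDeriv Q (conj z) = conj (radialLogDeriv Q z) := by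
  simp [radialLogDeriv, aeval_conj]

lemma differentiableOn_radialLogDeriv {s : Set ℂ} (hQ : ∀ z ∈ s, aeval z Q ≠ 0) :
    DifferentiableOn ℂ (radialLogDeriv Q) s :=
  (differentiableOn_id.mul (derivative Q).differentiable_aeval.differentiableOn).div
    Q.differentiable_aeval.differentiableOn hQ

lemma norm_exp_neg_two_mul_I_mul (x : ℝ) : ‖Complex.exp (-2 * Complex.I * x)‖ = 1 := by
  simp [Complex.norm_exp]

lemma aeval_exp_ne_zero (hQ : ∀ z : ℂ, ‖z‖ ≤ 1 → aeval z Q ≠ 0) (x : ℝ) :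
    aeval (Complex.exp (-2 * Complex.I * x)) Q ≠ 0 :=
  hQ _ (norm_exp_neg_two_mul_I_mul x).le

lemma twistedEval_ne_zero (hQ : ∀ z : ℂ, ‖z‖ ≤ 1 → aeval z Q ≠ 0) (x : ℝ) :
    twistedEval n Q x ≠ 0 :=
  mul_ne_zero (Complex.exp_ne_zero _) (aeval_exp_ne_zero hQ x)

lemma im_twistedEval_zero (n : ℕ) (Q : ℝ[X]) : (twistedEval n Q 0).im = 0 := by
  have hreal : aeval (1 : ℂ) Q = ((Q.eval 1 : ℝ) : ℂ) := by
    simpa using aeval_algebraMap_apply_eq_algebraMap_eval (A := ℂ) (1 : ℝ) Q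
  simp [twistedEval, hreal]

lemma hasDerivAt_twistedEval (n : ℕ) (Q : ℝ[X]) (x : ℝ) :
    HasDerivAt (twistedEval n Q)
      (Complex.I * n * twistedEval n Q x - 2 * Complex.I * Complex.exp (Complex.I * x * n) *
        (Complex.exp (-2 * Complex.I * x) *
          aeval (Complex.exp (-2 * Complex.I * x)) (derivative Q))) x := by
  have hofReal : HasDerivAt (fun x : ℝ => (x : ℂ)) 1 x := Complex.ofRealCLM.hasDerivAt
  have hcircle := (hofReal.const_mul (-2 * Complex.I)).cexp
  refine (((hofReal.const_mul Complex.I).mul_const (n : ℂ)).cexp.mul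
    ((Q.hasDerivAt_aeval _).comp x hcircle)).congr_deriv ?_
  simp only [twistedEval, Function.comp_apply]
  ring

lemma logDeriv_twistedEval (hQ : ∀ z : ℂ, ‖z‖ ≤ 1 → aeval z Q ≠ 0) (x : ℝ) :
    logDeriv (twistedEval n Q) x =
      Complex.I * (n - 2 * radialLogDeriv Q (Complex.exp (-2 * Complex.I * x))) := by
  have hne := aeval_exp_ne_zero hQ x
  rw [logDeriv_apply, (hasDerivAt_twistedEval n Q x).deriv, radialLogDeriv, twistedEval]
  generalize Complex.exp (-2 * Complex.I * x) = w at hne ⊢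
  field_simp

lemma im_logDeriv_twistedEval (hQ : ∀ z : ℂ, ‖z‖ ≤ 1 → aeval z Q ≠ 0) (x : ℝ) :
    (logDeriv (twistedEval n Q) x).im =
      n - 2 * (radialLogDeriv Q (Complex.exp (-2 * Complex.I * x))).re := by
  rw [logDeriv_twistedEval hQ]
  simp

lemma re_div_sub_le_half {ρ : ℂ} (hz : ‖z‖ ≤ 1) (hρ : 1 < ‖ρ‖) : (z / (z - ρ)).re ≤ 1 / 2 := by
  have hzρ : z - ρ ≠ 0 := fun h => by
    rw [sub_eq_zero.1 h] at hz
    exact hρ.not_ge hz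
  have hsq : z.re * z.re + z.im * z.im ≤ ρ.re * ρ.re + ρ.im * ρ.im := by
    rw [← Complex.normSq_apply, ← Complex.normSq_apply, Complex.normSq_eq_norm_sq,
      Complex.normSq_eq_norm_sq]
    exact pow_le_pow_left₀ (norm_nonneg z) (hz.trans hρ.le) 2
  rw [Complex.div_re, ← add_div, div_le_div_iff₀ (Complex.normSq_pos.2 hzρ) two_pos,
    Complex.normSq_apply, Complex.sub_re, Complex.sub_im]
  linarith

lemma re_radialLogDeriv_le (hQ : ∀ z : ℂ, ‖z‖ ≤ 1 → aeval z Q ≠ 0) (hz : ‖z‖ ≤ 1) :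
    (radialLogDeriv Q z).re ≤ Q.natDegree / 2 := by
  set p : ℂ[X] := Q.map (algebraMap ℝ ℂ)
  have hp (w : ℂ) : aeval w Q = p.eval w := by rw [eval_map_algebraMap]
  have hp' : aeval z (derivative Q) = p.derivative.eval z := by
    rw [derivative_map, eval_map_algebraMap]
  have hsplits : p.Splits := IsAlgClosed.splits p
  have hpz : p.eval z ≠ 0 := hp z ▸ hQ z hz
  have hbound : ∀ r ∈ p.roots.map fun ρ => (z / (z - ρ)).re, r ≤ (1 / 2 : ℝ) := by
    intro r hr
    obtain ⟨ρ, hρ, rfl⟩ := Multiset.mem_map.1 hr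
    refine re_div_sub_le_half hz (lt_of_not_ge fun hle => hQ ρ hle ?_)
    rw [hp]
    exact isRoot_of_mem_roots hρ
  have hsum := Multiset.sum_le_card_nsmul _ _ hbound
  rw [Multiset.card_map, ← hsplits.natDegree_eq_card_roots, natDegree_map] at hsum
  have hre : (radialLogDeriv Q z).re = (p.roots.map fun ρ => (z / (z - ρ)).re).sum := by
    rw [radialLogDeriv, hp', hp, mul_div_assoc, hsplits.eval_derivative_div_eval_of_ne_zero hpz,
      ← Multiset.sum_map_mul_left]
    refine (map_multiset_sum Complex.reAddGroupHom _).trans ?_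
    simp [div_eq_mul_inv]
  rw [hre]
  simpa [div_eq_mul_inv] using hsum

lemma im_logDeriv_twistedEval_pos (hdeg : Q.natDegree < n)
    (hQ : ∀ z : ℂ, ‖z‖ ≤ 1 → aeval z Q ≠ 0) (x : ℝ) : 0 < (logDeriv (twistedEval n Q) x).im := by
  have hle := re_radialLogDeriv_le hQ (norm_exp_neg_two_mul_I_mul x).le
  have hdeg' : (Q.natDegree : ℝ) < n := Nat.cast_lt.2 hdeg
  rw [im_logDeriv_twistedEval hQ]
  linarith

lemma integral_re_circleMap_eq_zero {f : ℂ → ℂ} (hf : DiffContOnCl ℂ f (Metric.ball 0 1))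
    (hf0 : f 0 = 0) (hconj : ∀ z, f (conj z) = conj (f z)) :
    ∫ s in (0 : ℝ)..π, (f (circleMap 0 1 s)).re = 0 := by
  have hcont : Continuous fun s : ℝ => f (circleMap 0 1 s) := by
    refine hf.continuousOn.comp_continuous (continuous_circleMap 0 1) fun s => ?_
    simp [closure_ball _ one_ne_zero]
  have hre : Continuous fun s : ℝ => (f (circleMap 0 1 s)).re := Complex.continuous_re.comp hcont
  have hper : Function.Periodic (fun s : ℝ => (f (circleMap 0 1 s)).re) (2 * π) :=
    fun s => by simp only [periodic_circleMap 0 1 s]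
  have heven (s : ℝ) : (f (circleMap 0 1 (-s))).re = (f (circleMap 0 1 s)).re := by
    have hneg : circleMap 0 1 (-s) = conj (circleMap 0 1 s) := by
      simp [circleMap, ← Complex.exp_conj]
    rw [hneg, hconj, Complex.conj_re]
  have hmean : ∫ s in (0 : ℝ)..2 * π, (f (circleMap 0 1 s)).re = 0 := by
    have havg := DiffContOnCl.circleAverage (c := 0) (R := 1) (by simpa using hf)
    rw [hf0, Real.circleAverage_def, smul_eq_zero_iff_right (by positivity)] at havg
    have hreal := intervalIntegral.intervalIntegral_re (μ := MeasureTheory.volume)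
      (hcont.intervalIntegrable 0 (2 * π))
    rw [havg] at hreal
    exact hreal
  have hhalf : ∫ s in (-π)..0, (f (circleMap 0 1 s)).re =
      ∫ s in (0 : ℝ)..π, (f (circleMap 0 1 s)).re := by
    have hneg := intervalIntegral.integral_comp_neg (a := 0) (b := π)
      fun s => (f (circleMap 0 1 s)).re
    simpa [heven] using hneg.symm
  have hshift := hper.intervalIntegral_add_eq (-π) 0
  rw [zero_add, hmean, show -π + 2 * π = π by ring,
    ← intervalIntegral.integral_add_adjacent_intervals (b := 0) (hre.intervalIntegrable _ _)
      (hre.intervalIntegrable _ _), hhalf] at hshift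
  linarith

lemma integral_re_radialLogDeriv_exp (hQ : ∀ z : ℂ, ‖z‖ ≤ 1 → aeval z Q ≠ 0) :
    ∫ s in (0 : ℝ)..π / 2, (radialLogDeriv Q (Complex.exp (-2 * Complex.I * s))).re = 0 := by
  have hdiff : DiffContOnCl ℂ (radialLogDeriv Q) (Metric.ball 0 1) := by
    refine (differentiableOn_radialLogDeriv fun z hz => hQ z ?_).diffContOnCl
    rwa [closure_ball _ one_ne_zero, mem_closedBall_zero_iff] at hz
  have hcircle (s : ℝ) : (radialLogDeriv Q (Complex.exp (-2 * Complex.I * s))).re =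
      (radialLogDeriv Q (circleMap 0 1 (2 * s))).re := by
    have hconj : Complex.exp (-2 * Complex.I * s) = conj (circleMap 0 1 (2 * s)) := by
      simp [circleMap, ← Complex.exp_conj, Complex.conj_ofNat, mul_comm, mul_left_comm]
    rw [hconj, radialLogDeriv_conj, Complex.conj_re]
  simp only [hcircle]
  rw [intervalIntegral.integral_comp_mul_left (fun s => (radialLogDeriv Q (circleMap 0 1 s)).re)
    two_ne_zero, mul_zero, mul_div_cancel₀ π two_ne_zero,
    integral_re_circleMap_eq_zero hdiff (by simp [radialLogDeriv]) (radialLogDeriv_conj Q),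
    smul_zero]

lemma continuous_logDeriv_twistedEval {T : Type*} [TopologicalSpace T] {Q : T → ℝ[X]} {N : ℕ}
    (hdeg : ∀ t, (Q t).natDegree < N) (hcoeff : ∀ i, Continuous fun t => (Q t).coeff i)
    (hQ : ∀ t, ∀ z : ℂ, ‖z‖ ≤ 1 → aeval z (Q t) ≠ 0) :
    Continuous (Function.uncurry fun t => logDeriv (twistedEval n (Q t))) := by
  have haeval {P : T → ℝ[X]} (hP : ∀ t, (P t).natDegree < N)
      (hPc : ∀ i, Continuous fun t => (P t).coeff i) :
      Continuous fun p : T × ℝ => aeval (Complex.exp (-2 * Complex.I * p.2)) (P p.1) := by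
    simp only [fun t z => aeval_eq_sum_range' (hP t) (z : ℂ)]
    exact continuous_finsetSum _ fun i _ => ((hPc i).comp continuous_fst).smul (by fun_prop)
  have hderiv := haeval (P := fun t => derivative (Q t))
    (fun t => ((natDegree_derivative_le _).trans (Nat.sub_le _ _)).trans_lt (hdeg t))
    (fun i => by simp only [coeff_derivative]; fun_prop)
  have hlog : (Function.uncurry fun t => logDeriv (twistedEval n (Q t))) = fun p : T × ℝ =>
      Complex.I * (n - 2 * radialLogDeriv (Q p.1) (Complex.exp (-2 * Complex.I * p.2))) :=
    funext fun p => logDeriv_twistedEval (hQ p.1) p.2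
  rw [hlog]
  unfold radialLogDeriv
  exact continuous_const.mul (continuous_const.sub (continuous_const.mul
    (((by fun_prop : Continuous _).mul hderiv).div (haeval hdeg hcoeff) fun p =>
      aeval_exp_ne_zero (hQ p.1) p.2)))

lemma phase_twistedEval_pi_div_two (hQ : ∀ z : ℂ, ‖z‖ ≤ 1 → aeval z Q ≠ 0) :
    phase (twistedEval n Q) (π / 2) = n * (π / 2) := by
  have hcont : Continuous fun s : ℝ =>
      (radialLogDeriv Q (Complex.exp (-2 * Complex.I * s))).re := by
    refine Complex.continuous_re.comp ((differentiableOn_radialLogDeriv (s := Metric.closedBall 0 1)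
      fun z hz => hQ z (by simpa using hz)).continuousOn.comp_continuous (by fun_prop) fun s => ?_)
    simp [Complex.norm_exp]
  simp only [phase, im_logDeriv_twistedEval hQ]
  rw [intervalIntegral.integral_sub (by simp) ((hcont.intervalIntegrable _ _).const_mul 2),
    intervalIntegral.integral_const_mul, integral_re_radialLogDeriv_exp hQ]
  simp [mul_comm]

end TwistedEval

section ContinuousLevel

variable {T : Type*} [TopologicalSpace T] {θ : T → ℝ → ℝ} {a b c : ℝ}

lemma exists_continuous_eq_of_strictMono (hab : a ≤ b) (hθ : Continuous (Function.uncurry θ))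
    (hmono : ∀ t, StrictMono (θ t)) (hc : ∀ t, c ∈ Set.Ioo (θ t a) (θ t b)) :
    ∃ y : T → ℝ, Continuous y ∧ ∀ t, y t ∈ Set.Ioo a b ∧ θ t (y t) = c := by
  have hex (t : T) : ∃ y ∈ Set.Ioo a b, θ t y = c :=
    intermediate_value_Ioo hab (hθ.uncurry_left t).continuousOn (hc t)
  choose y hy hyc using hex
  refine ⟨y, continuous_iff_continuousAt.2 fun t => ?_, fun t => ⟨hy t, hyc t⟩⟩
  refine tendsto_order.2 ⟨fun l hl => ?_, fun r hr => ?_⟩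
  · have hlt : θ t l < c := hyc t ▸ hmono t hl
    filter_upwards [(hθ.uncurry_right l).continuousAt.eventually_lt_const hlt] with s hs
    exact (hmono s).lt_iff_lt.1 (hs.trans_eq (hyc s).symm)
  · have hlt : c < θ t r := hyc t ▸ hmono t hr
    filter_upwards [(hθ.uncurry_right r).continuousAt.eventually_const_lt hlt] with s hs
    exact (hmono s).lt_iff_lt.1 ((hyc s).trans_lt hs)

end ContinuousLevel

section ZeroMotion

/-- On the time interval `[0, ∞)`, the zeros of `F t` in the open interval `(a, b)` are the values
at `t` of the continuous functions `x 1 < ⋯ < x m`; the other values of `x` are irrelevant. -/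
structure IsZeroEnumeration {M : Type*} [Zero M] (F : ℝ → ℝ → M) (a b : ℝ) (m : ℕ)
    (x : ℕ → ℝ → ℝ) : Prop where
  continuousOn : ∀ k ∈ Finset.Icc 1 m, ContinuousOn (x k) (Set.Ici 0)
  lt_succ : ∀ t : ℝ, 0 ≤ t → ∀ k, 1 ≤ k → k < m → x k t < x (k + 1) t
  zeros_eq : ∀ t : ℝ, 0 ≤ t →
    {z : ℝ | z ∈ Set.Ioo a b ∧ F t z = 0} = (fun k => x k t) '' Set.Icc 1 m

/-- On the time interval `[0, ∞)`, the motion `f` is constant, or strictly decreasing with later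
values above `l`, or strictly increasing with later values below `r`. -/
def MotionTrichotomy (f : ℝ → ℝ) (l r : ℝ) : Prop :=
  ExactlyOne
    (∀ t : ℝ, 0 ≤ t → f t = f 0)
    (StrictAntiOn f (Set.Ici 0) ∧ ∀ t : ℝ, 0 < t → f t ∈ Set.Ioo l (f 0))
    (StrictMonoOn f (Set.Ici 0) ∧ ∀ t : ℝ, 0 < t → f t ∈ Set.Ioo (f 0) r)

lemma strictMonoOn_or_strictAntiOn_Ici {f : ℝ → ℝ} {a : ℝ} (hf : ContinuousOn f (Set.Ici a))
    (hinj : Set.InjOn f (Set.Ici a)) :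
    StrictMonoOn f (Set.Ici a) ∨ StrictAntiOn f (Set.Ici a) := by
  have : Inhabited (Set.Ici a) := ⟨⟨a, Set.self_mem_Ici⟩⟩
  exact (Continuous.strictMono_of_inj hf.domRestrict hinj.injective).imp
    strictMono_domRestrict.1 Set.strictAntiOn_iff_strictAnti.2

lemma motionTrichotomy_of_const_or_injOn {f : ℝ → ℝ} {l r : ℝ} (hf : ContinuousOn f (Set.Ici 0))
    (h : (∀ t, 0 ≤ t → f t = f 0) ∨ Set.InjOn f (Set.Ici 0))
    (hmem : ∀ t, 0 ≤ t → f t ∈ Set.Ioo l r) : MotionTrichotomy f l r := by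
  rcases h with hconst | hinj
  · have hone : f 1 = f 0 := hconst 1 zero_le_one
    exact Or.inl ⟨hconst, fun h => (h.2 1 one_pos).2.ne hone, fun h => (h.2 1 one_pos).1.ne' hone⟩
  rcases strictMonoOn_or_strictAntiOn_Ici hf hinj with hmono | hanti
  · have hlt (t : ℝ) (ht : 0 < t) : f 0 < f t := hmono Set.self_mem_Ici ht.le ht
    exact Or.inr (Or.inr ⟨fun h => (hlt 1 one_pos).ne' (h 1 zero_le_one),
      fun h => lt_asymm (hlt 1 one_pos) (h.2 1 one_pos).2,
      hmono, fun t ht => ⟨hlt t ht, (hmem t ht.le).2⟩⟩)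
  · have hlt (t : ℝ) (ht : 0 < t) : f t < f 0 := hanti Set.self_mem_Ici ht.le ht
    exact Or.inr (Or.inl ⟨fun h => (hlt 1 one_pos).ne (h 1 zero_le_one),
      ⟨hanti, fun t ht => ⟨(hmem t ht.le).1, hlt t ht⟩⟩,
      fun h => lt_asymm (hlt 1 one_pos) (h.2 1 one_pos).1⟩)

lemma lt_of_lt_of_forall_ne {f : ℝ → ℝ} {a c : ℝ} (hf : ContinuousOn f (Set.Ici a))
    (ha : f a < c) (hne : ∀ t, a ≤ t → f t ≠ c) {t : ℝ} (ht : a ≤ t) : f t < c := by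
  by_contra! hle
  obtain ⟨s, hs, hsc⟩ := isPreconnected_Ici.intermediate_value Set.self_mem_Ici ht hf ⟨ha.le, hle⟩
  exact hne s hs hsc

lemma lt_of_gt_of_forall_ne {f : ℝ → ℝ} {a c : ℝ} (hf : ContinuousOn f (Set.Ici a))
    (ha : c < f a) (hne : ∀ t, a ≤ t → f t ≠ c) {t : ℝ} (ht : a ≤ t) : c < f t :=
  neg_lt_neg_iff.1 (lt_of_lt_of_forall_ne hf.neg (neg_lt_neg ha)
    (fun s hs h => hne s hs (neg_injective h)) ht)

namespace IsZeroEnumeration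

variable {M : Type*} [Zero M] {F : ℝ → ℝ → M} {a b : ℝ} {m : ℕ} {x : ℕ → ℝ → ℝ} {j k : ℕ} {t : ℝ}

lemma mem_Ioo_and_eq_zero (h : IsZeroEnumeration F a b m x) (ht : 0 ≤ t)
    (hk : k ∈ Finset.Icc 1 m) : x k t ∈ Set.Ioo a b ∧ F t (x k t) = 0 :=
  (h.zeros_eq t ht).ge ⟨k, Finset.mem_Icc.1 hk, rfl⟩

lemma injOn (h : IsZeroEnumeration F a b m x) (ht : 0 ≤ t) :
    Set.InjOn (fun k => x k t) (Set.Icc 1 m) :=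
  (strictMonoOn_of_lt_succ Set.ordConnected_Icc fun k _ hk hk' =>
    h.lt_succ t ht k hk.1 (Nat.lt_of_succ_le hk'.2)).injOn

lemma eq_of_forall_eq_zero (h : IsZeroEnumeration F a b m x) (hk : k ∈ Finset.Icc 1 m) {s : ℝ}
    (hs : 0 ≤ s) (hzero : ∀ r, F r (x k s) = 0) (ht : 0 ≤ t) : x k t = x k s := by
  let A (j : ℕ) : Set ℝ := Set.Ici 0 ∩ x j ⁻¹' {x k s}
  have hclosed : ∀ j ∈ Finset.Icc 1 m, IsClosed (A j) := fun j hj =>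
    (h.continuousOn j hj).preimage_isClosed_of_isClosed isClosed_Ici isClosed_singleton
  have hcover : Set.Ici 0 ⊆ A k ∪ ⋃ j ∈ (Finset.Icc 1 m).erase k, A j := by
    intro r hr
    obtain ⟨j, hj, hjr⟩ := (h.zeros_eq r hr).le ⟨(h.mem_Ioo_and_eq_zero hs hk).1, hzero r⟩
    rcases eq_or_ne j k with rfl | hjk
    · exact Or.inl ⟨hr, hjr⟩
    · exact Or.inr (Set.mem_biUnion (Finset.mem_erase.2 ⟨hjk, Finset.mem_Icc.2 hj⟩) ⟨hr, hjr⟩)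
  have hdisj : Disjoint (A k) (⋃ j ∈ (Finset.Icc 1 m).erase k, A j) := by
    refine Set.disjoint_left.2 fun r hrk hr => ?_
    obtain ⟨j, hj, hrj⟩ := Set.mem_iUnion₂.1 hr
    obtain ⟨hjk, hj⟩ := Finset.mem_erase.1 hj
    exact hjk (h.injOn hrk.1 (Finset.mem_Icc.1 hj) (Finset.mem_Icc.1 hk) (hrj.2.trans hrk.2.symm))
  rcases (isPreconnected_iff_subset_of_fully_disjoint_closed isClosed_Ici).1 isPreconnected_Ici _ _
    (hclosed k hk) (isClosed_biUnion_finset fun j hj => hclosed j (Finset.mem_of_mem_erase hj))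
    hcover hdisj with hsub | hsub
  · exact (hsub ht).2
  · exact absurd (hsub hs) (Set.disjoint_left.1 hdisj ⟨hs, rfl⟩)

variable (hrigid : ∀ s t, s ≠ t → ∀ y, F s y = 0 → F t y = 0 → ∀ r, F r y = 0)
include hrigid

lemma const_or_injOn (h : IsZeroEnumeration F a b m x) (hk : k ∈ Finset.Icc 1 m) :
    (∀ t, 0 ≤ t → x k t = x k 0) ∨ Set.InjOn (x k) (Set.Ici 0) := by
  by_contra! ⟨⟨r, hr, hne⟩, hinj⟩
  obtain ⟨s, hs, t, ht, heq, hst⟩ : ∃ s, 0 ≤ s ∧ ∃ t, 0 ≤ t ∧ x k s = x k t ∧ s ≠ t := by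
    simpa [Set.InjOn] using hinj
  have hzero := hrigid s t hst (x k s) (h.mem_Ioo_and_eq_zero hs hk).2
    (heq ▸ (h.mem_Ioo_and_eq_zero ht hk).2)
  exact hne ((h.eq_of_forall_eq_zero hk hs hzero hr).trans
    (h.eq_of_forall_eq_zero hk hs hzero le_rfl).symm)

lemma ne_apply_zero (h : IsZeroEnumeration F a b m x) (hj : j ∈ Finset.Icc 1 m)
    (hk : k ∈ Finset.Icc 1 m) (hjk : j ≠ k) (ht : 0 ≤ t) : x k t ≠ x j 0 := by
  intro heq
  have hjt : x j t = x j 0 := by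
    rcases eq_or_ne t 0 with rfl | ht0
    · rfl
    · exact h.eq_of_forall_eq_zero hj le_rfl (hrigid 0 t ht0.symm _
        (h.mem_Ioo_and_eq_zero le_rfl hj).2 (heq ▸ (h.mem_Ioo_and_eq_zero ht hk).2)) ht
  exact hjk (h.injOn ht (Finset.mem_Icc.1 hj) (Finset.mem_Icc.1 hk) (hjt.trans heq.symm))

lemma motionTrichotomy (h : IsZeroEnumeration F a b m x) (hk : k ∈ Finset.Icc 1 m) :
    MotionTrichotomy (x k) (if k = 1 then a else x (k - 1) 0)
      (if k = m then b else x (k + 1) 0) := by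
  have hcont := h.continuousOn k hk
  obtain ⟨hk1, hkm⟩ := Finset.mem_Icc.1 hk
  refine motionTrichotomy_of_const_or_injOn hcont (h.const_or_injOn hrigid hk) fun t ht => ⟨?_, ?_⟩
  · split_ifs with hfirst
    · exact (h.mem_Ioo_and_eq_zero ht hk).1.1
    · obtain ⟨j, rfl⟩ : ∃ j, k = j + 1 := ⟨k - 1, by omega⟩
      exact lt_of_gt_of_forall_ne hcont (h.lt_succ 0 le_rfl j (by omega) (by omega))
        (fun s hs => h.ne_apply_zero hrigid (Finset.mem_Icc.2 (by omega)) hk (by omega) hs) ht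
  · split_ifs with hlast
    · exact (h.mem_Ioo_and_eq_zero ht hk).1.2
    · exact lt_of_lt_of_forall_ne hcont (h.lt_succ 0 le_rfl k hk1 (by omega))
        (fun s hs => h.ne_apply_zero hrigid (Finset.mem_Icc.2 (by omega)) hk (by omega) hs) ht

end IsZeroEnumeration

lemma mem_Ioo_and_cos_eq_zero_iff {n : ℕ} {c : ℝ} :
    c ∈ Set.Ioo 0 (n * (π / 2)) ∧ Real.cos c = 0 ↔
      ∃ k ∈ Set.Icc 1 (n / 2), (2 * k - 1 : ℝ) * (π / 2) = c := by
  have hpi : 0 < π / 2 := by positivity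
  constructor
  · rintro ⟨⟨hpos, hlt⟩, hcos⟩
    obtain ⟨i, rfl⟩ := Real.cos_eq_zero_iff.1 hcos
    rw [mul_div_assoc] at hpos hlt
    have hi0 : 0 < 2 * i + 1 := by exact_mod_cast pos_of_mul_pos_left hpos hpi.le
    have hin : 2 * i + 1 < n := by exact_mod_cast lt_of_mul_lt_mul_right hlt hpi.le
    obtain ⟨j, rfl⟩ := Int.eq_ofNat_of_zero_le (show 0 ≤ i by omega)
    refine ⟨j + 1, ⟨by omega, by omega⟩, ?_⟩
    push_cast
    ring
  · rintro ⟨k, ⟨hk1, hkn⟩, rfl⟩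
    have hk1' : (1 : ℝ) ≤ k := by exact_mod_cast hk1
    have hkn' : (2 * k : ℝ) ≤ n := by exact_mod_cast (show 2 * k ≤ n by omega)
    refine ⟨⟨mul_pos (by linarith) hpi, mul_lt_mul_of_pos_right (by linarith) hpi⟩, ?_⟩
    exact Real.cos_eq_zero_iff.2 ⟨(k : ℤ) - 1, by push_cast; ring⟩

lemma exists_isZeroEnumeration {M : Type*} [Zero M] {F : ℝ → ℝ → M} {θ : ℝ → ℝ → ℝ} {a b : ℝ}
    {n : ℕ} (hθ : Continuous (Function.uncurry θ)) (hmono : ∀ t, StrictMono (θ t))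
    (hθa : ∀ t, θ t a = 0) (hθb : ∀ t, θ t b = n * (π / 2))
    (hF : ∀ t, 0 ≤ t → ∀ z, F t z = 0 ↔ Real.cos (θ t z) = 0) :
    ∃ x, IsZeroEnumeration F a b (n / 2) x := by
  have hab : a ≤ b := by
    rw [← (hmono 0).le_iff_le, hθa, hθb]
    positivity
  have hlevel (k : ℕ) (hk : k ∈ Set.Icc 1 (n / 2)) : ∃ y : ℝ → ℝ, Continuous y ∧
      ∀ t, y t ∈ Set.Ioo a b ∧ θ t (y t) = (2 * k - 1) * (π / 2) :=
    exists_continuous_eq_of_strictMono hab hθ hmono fun t => by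
      rw [hθa, hθb]
      exact (mem_Ioo_and_cos_eq_zero_iff.2 ⟨k, hk, rfl⟩).1
  choose! x hcont hmem hx using hlevel
  refine ⟨x, fun k hk => (hcont k (Finset.mem_Icc.1 hk)).continuousOn, fun t _ k hk1 hkn => ?_,
    fun t ht => Set.ext fun z => ⟨fun ⟨hz, hz0⟩ => ?_, ?_⟩⟩
  · rw [← (hmono t).lt_iff_lt, hx k ⟨hk1, hkn.le⟩, hx (k + 1) ⟨by omega, hkn⟩]
    exact mul_lt_mul_of_pos_right (by push_cast; linarith) (by positivity)
  · have hθz : θ t z ∈ Set.Ioo 0 (n * (π / 2)) := by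
      rw [← hθa t, ← hθb t]
      exact ⟨hmono t hz.1, hmono t hz.2⟩
    obtain ⟨k, hk, hkz⟩ := mem_Ioo_and_cos_eq_zero_iff.1 ⟨hθz, (hF t ht z).1 hz0⟩
    exact ⟨k, hk, (hmono t).injective ((hx k hk t).trans hkz)⟩
  · rintro ⟨k, hk, rfl⟩
    refine ⟨hmem k hk t, (hF t ht _).2 ?_⟩
    rw [hx k hk]
    exact (mem_Ioo_and_cos_eq_zero_iff.2 ⟨k, hk, rfl⟩).2

end ZeroMotion

section PlusPoly

open Polynomial ComplexConjugate

variable {V : Type*} [Fintype V] [DecidableEq V]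

/-- The generating polynomial, by size, of the cuts `(S, Sᶜ)` with `v ∉ S`, each weighted by the
activities of the edges across it. With `S` the set of minus spins, this is the contribution to the
Ising partition function of the configurations with a plus spin at `v`. -/
noncomputable def plusPoly (a : Matrix V V ℝ) (v : V) : ℝ[X] :=
  ∑ S ∈ (Finset.univ.erase v).powerset,
    C (∏ u ∈ S, ∏ w ∈ Finset.univ \ S, a u w) * X ^ S.card

lemma natDegree_plusPoly_lt (a : Matrix V V ℝ) (v : V) :
    (plusPoly a v).natDegree < Fintype.card V := by
  have hle : (plusPoly a v).natDegree ≤ (Finset.univ.erase v).card :=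
    natDegree_sum_le_of_forall_le _ _ fun S hS =>
      (natDegree_C_mul_X_pow_le _ _).trans (Finset.card_le_card (Finset.mem_powerset.1 hS))
  exact hle.trans_lt (Finset.card_erase_lt_of_mem (Finset.mem_univ v))

lemma continuous_coeff_plusPoly {T : Type*} [TopologicalSpace T] {a : T → Matrix V V ℝ}
    (ha : Continuous a) (v : V) (i : ℕ) : Continuous fun t => (plusPoly (a t) v).coeff i := by
  simp only [plusPoly, finsetSum_coeff, coeff_C_mul]
  exact continuous_finsetSum _ fun S _ => (continuous_finsetProd _ fun u _ =>
    continuous_finsetProd _ fun w _ => ha.matrix_elem u w).mul continuous_const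

lemma aeval_plusPoly (a : Matrix V V ℝ) (v : V) (z : ℂ) :
    aeval z (plusPoly a v) = cutPoly (a.map Complex.ofReal) Finset.univ 1
      (Function.update (fun _ => z) v 0) := by
  rw [plusPoly, map_sum]
  refine (Finset.sum_subset_zero_on_sdiff (Finset.powerset_mono.2 (Finset.erase_subset v _))
    (fun S hS => ?_) fun S hS => ?_)
  · have hvS : v ∈ S := by
      simp only [Finset.mem_sdiff, Finset.mem_powerset, Finset.subset_erase] at hS
      tauto
    simp [Finset.prod_update_of_mem hvS]
  · have hvS : v ∉ S := (Finset.subset_erase.1 (Finset.mem_powerset.1 hS)).2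
    simp [Finset.prod_update_of_notMem hvS, mul_comm]

lemma exp_mul_cutPoly_exp {a : Matrix V V ℝ} (ha : a.IsSymm) (v : V) (x : ℝ) :
    Complex.exp (Complex.I * x * (Fintype.card V : ℕ)) *
        cutPoly (a.map Complex.ofReal) Finset.univ 1 (fun _ => Complex.exp (-2 * Complex.I * x)) =
      (2 * (twistedEval (Fintype.card V) (plusPoly a v) x).re : ℝ) := by
  have hherm : (a.map Complex.ofReal).IsHermitian :=
    Matrix.IsHermitian.ext fun u w => by simp [ha.apply]
  set z : V → ℂ := fun _ => Complex.exp (-2 * Complex.I * x) with hz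
  have hstar : star (Function.update 1 v 0 : V → ℂ) * z = Function.update z v 0 := by
    ext u
    rcases eq_or_ne u v with rfl | huv <;> simp [*]
  have hexp : Complex.exp (Complex.I * x * (Fintype.card V : ℕ)) * ∏ u, z u =
      conj (Complex.exp (Complex.I * x * (Fintype.card V : ℕ))) := by
    rw [hz, Finset.prod_const, Finset.card_univ, ← Complex.exp_nat_mul, ← Complex.exp_add,
      ← Complex.exp_conj]
    simp only [map_mul, Complex.conj_I, Complex.conj_ofReal, map_natCast]
    ring_nf
  rw [cutPoly_eq_add_update _ (Finset.mem_univ v), mul_add,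
    ← prod_mul_conj_cutPoly hherm (fun _ _ => norm_exp_neg_two_mul_I_mul x), hstar, ← mul_assoc,
    hexp, ← map_mul, Complex.add_conj, twistedEval, aeval_plusPoly]

end PlusPoly

section IsingPartition

open Polynomial

variable {V : Type}

/-- The edge activities of the couplings `K`: the Boltzmann factors for flipping one end. -/
noncomputable def edgeActivity (K : Sym2 V → ℝ) : Matrix V V ℝ :=
  Matrix.of fun u w => Real.exp (-2 * K s(u, w))

lemma isSymm_edgeActivity (K : Sym2 V → ℝ) : (edgeActivity K).IsSymm :=
  Matrix.IsSymm.ext fun u w => by simp [edgeActivity, Sym2.eq_swap]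

variable [DecidableEq V]

/-- The spin configuration whose minus spins are the vertices of `S`. -/
def minusOn (S : Finset V) (u : V) : Bool := decide (u ∉ S)

lemma bijective_minusOn [Finite V] : Function.Bijective (minusOn : Finset V → V → Bool) := by
  have := Fintype.ofFinite V
  refine ⟨fun S T h => Finset.ext fun u => ?_,
    fun σ => ⟨Finset.univ.filter fun u => σ u = false, funext fun u => ?_⟩⟩
  · simpa [minusOn] using congrFun h u
  · simp [minusOn]

lemma spin_minusOn (S : Finset V) (u : V) : spin (minusOn S u) = if u ∈ S then -1 else 1 := by
  simp [spin, minusOn]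

variable [Fintype V]

/-- The Ising partition function with coupling `K e` at every unordered pair `e` and external field
`i x`. The pairs on the diagonal only contribute a constant factor. -/
noncomputable def isingPartition (K : Sym2 V → ℝ) (x : ℂ) : ℂ :=
  ∑ σ : V → Bool, Complex.exp
    (((∑ e, K e * pairProd σ e : ℝ) : ℂ) + Complex.I * x * ((∑ u, spin (σ u) : ℝ) : ℂ))

lemma sum_spin_minusOn (S : Finset V) :
    ∑ u, spin (minusOn S u) = Fintype.card V - 2 * S.card := by
  have hspin (u : V) : spin (minusOn S u) = 1 - 2 * if u ∈ S then 1 else 0 := by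
    rw [spin_minusOn]
    split_ifs <;> norm_num
  simp [hspin, Finset.sum_sub_distrib, mul_comm]

lemma pairProd_minusOn (S : Finset V) (e : Sym2 V) :
    pairProd (minusOn S) e =
      1 - 2 * if e ∈ (S ×ˢ (Finset.univ \ S)).image (fun p => s(p.1, p.2)) then 1 else 0 := by
  induction e using Sym2.ind with
  | _ p q =>
  have hcut : s(p, q) ∈ (S ×ˢ (Finset.univ \ S)).image (fun p => s(p.1, p.2)) ↔
      ¬(p ∈ S ↔ q ∈ S) := by
    simp only [Finset.mem_image, Finset.mem_product, Finset.mem_sdiff, Finset.mem_univ, true_and,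
      Prod.exists, Sym2.eq_iff]
    grind
  simp only [hcut, pairProd, Sym2.lift_mk, spin_minusOn]
  by_cases hp : p ∈ S <;> by_cases hq : q ∈ S <;> simp [hp, hq] <;> norm_num

lemma sum_mul_pairProd_minusOn (K : Sym2 V → ℝ) (S : Finset V) :
    ∑ e, K e * pairProd (minusOn S) e =
      ∑ e, K e - 2 * ∑ u ∈ S, ∑ w ∈ Finset.univ \ S, K s(u, w) := by
  have hinj : Set.InjOn (fun p : V × V => s(p.1, p.2)) ↑(S ×ˢ (Finset.univ \ S)) := by
    rintro ⟨u, w⟩ huw ⟨u', w'⟩ huw' h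
    simp only [Finset.coe_product, Set.mem_prod, Finset.mem_coe, Finset.mem_sdiff,
      Finset.mem_univ, true_and, Sym2.eq_iff] at huw huw' h
    grind
  rw [← Finset.sum_product', ← Finset.sum_image (f := K) hinj]
  simp only [pairProd_minusOn, mul_sub, mul_one, Finset.sum_sub_distrib, mul_ite, mul_zero,
    Finset.sum_ite_mem, Finset.univ_inter]
  rw [← Finset.sum_mul, mul_comm (2 : ℝ)]

lemma isingPartition_eq_cutPoly (K : Sym2 V → ℝ) (x : ℂ) :
    isingPartition K x = Complex.exp (∑ e, K e : ℝ) *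
      (Complex.exp (Complex.I * x * (Fintype.card V : ℕ)) *
        cutPoly ((edgeActivity K).map Complex.ofReal) Finset.univ 1
          (fun _ => Complex.exp (-2 * Complex.I * x))) := by
  rw [isingPartition, ← bijective_minusOn.sum_comp, cutPoly, Finset.powerset_univ, Finset.mul_sum,
    Finset.mul_sum]
  refine Finset.sum_congr rfl fun S _ => ?_
  have hprod : ∏ u ∈ S, ∏ w ∈ Finset.univ \ S, (edgeActivity K).map Complex.ofReal u w =
      Complex.exp (-2 * ∑ u ∈ S, ∑ w ∈ Finset.univ \ S, K s(u, w) : ℝ) := by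
    simp only [edgeActivity, Matrix.map_apply, Matrix.of_apply, Finset.mul_sum, Complex.ofReal_exp,
      Complex.ofReal_sum, Complex.exp_sum]
  simp only [sum_mul_pairProd_minusOn, sum_spin_minusOn, hprod, Finset.prod_const, Pi.one_apply,
    one_pow, mul_one, ← Complex.exp_nat_mul, ← Complex.exp_add]
  congr 1
  push_cast
  ring

lemma isingPartition_eq_zero_iff_re_twistedEval (K : Sym2 V → ℝ) (v : V) (x : ℝ) :
    isingPartition K x = 0 ↔
      (twistedEval (Fintype.card V) (plusPoly (edgeActivity K) v) x).re = 0 := by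
  rw [isingPartition_eq_cutPoly, exp_mul_cutPoly_exp (isSymm_edgeActivity K) v]
  simp

lemma aeval_plusPoly_edgeActivity_ne_zero {K : Sym2 V → ℝ} (hK : ∀ e, 0 ≤ K e)
    (hconn : (SimpleGraph.fromEdgeSet {e | 0 < K e}).Connected) (v : V) (z : ℂ) (hz : ‖z‖ ≤ 1) :
    aeval z (plusPoly (edgeActivity K) v) ≠ 0 := by
  have hnorm (u w : V) :
      ‖(edgeActivity K).map Complex.ofReal u w‖ = Real.exp (-2 * K s(u, w)) :=
    (Complex.norm_real _).trans (Real.norm_of_nonneg (Real.exp_nonneg _))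
  have hherm : ((edgeActivity K).map Complex.ofReal).IsHermitian :=
    Matrix.IsHermitian.ext fun u w => by simp [(isSymm_edgeActivity K).apply]
  rw [aeval_plusPoly]
  refine cutPoly_ne_zero hherm (fun u w => ?_) _ _ (fun u _ => ?_) fun S _ ⟨p, hp⟩ hS => ?_
  · rw [hnorm, Real.exp_le_one_iff]
    linarith [hK s(u, w)]
  · rcases eq_or_ne u v with rfl | huv <;> simp [*]
  · have hvS : v ∉ S := fun hv => by simpa using hS v hv
    obtain ⟨path⟩ := hconn.preconnected p v
    obtain ⟨d, -, hd, hd'⟩ := path.exists_boundary_dart (S : Set V) hp hvS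
    have hpos : 0 < K s(d.fst, d.snd) := ((SimpleGraph.fromEdgeSet_adj _).1 d.adj).1
    refine ⟨d.fst, hd, d.snd, by simpa using hd', ?_⟩
    rw [hnorm, Real.exp_lt_one_iff]
    linarith

/-- The phase whose cosine vanishes exactly at the zeros of the Ising partition function: that of
the contribution of the configurations with a plus spin at `v`. -/
noncomputable def isingPhase (K : Sym2 V → ℝ) (v : V) : ℝ → ℝ :=
  phase (twistedEval (Fintype.card V) (plusPoly (edgeActivity K) v))

lemma continuous_uncurry_isingPhase {T : Type*} [TopologicalSpace T] {K : T → Sym2 V → ℝ}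
    (hcont : Continuous K) (hK : ∀ t e, 0 ≤ K t e)
    (hconn : ∀ t, (SimpleGraph.fromEdgeSet {e | 0 < K t e}).Connected) (v : V) :
    Continuous (Function.uncurry fun t => isingPhase (K t) v) := by
  have hactivity : Continuous fun t => edgeActivity (K t) :=
    continuous_matrix fun u w => by simp only [edgeActivity, Matrix.of_apply]; fun_prop
  exact continuous_uncurry_phase (continuous_logDeriv_twistedEval
    (fun t => natDegree_plusPoly_lt (edgeActivity (K t)) v) (continuous_coeff_plusPoly hactivity v)
    fun t => aeval_plusPoly_edgeActivity_ne_zero (hK t) (hconn t) v)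

variable {K : Sym2 V → ℝ} (hK : ∀ e, 0 ≤ K e)
  (hconn : (SimpleGraph.fromEdgeSet {e | 0 < K e}).Connected) (v : V)
include hK hconn

lemma continuous_logDeriv_twistedEval_plusPoly :
    Continuous (logDeriv (twistedEval (Fintype.card V) (plusPoly (edgeActivity K) v))) :=
  (continuous_logDeriv_twistedEval (T := Unit) (fun _ => natDegree_plusPoly_lt (edgeActivity K) v)
    (fun _ => continuous_const)
    fun _ => aeval_plusPoly_edgeActivity_ne_zero hK hconn v).uncurry_left ()

lemma strictMono_isingPhase : StrictMono (isingPhase K v) :=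
  strictMono_phase (continuous_logDeriv_twistedEval_plusPoly hK hconn v)
    (im_logDeriv_twistedEval_pos (natDegree_plusPoly_lt _ v)
      (aeval_plusPoly_edgeActivity_ne_zero hK hconn v))

lemma isingPhase_pi_div_two : isingPhase K v (π / 2) = Fintype.card V * (π / 2) :=
  phase_twistedEval_pi_div_two (aeval_plusPoly_edgeActivity_ne_zero hK hconn v)

lemma isingPartition_eq_zero_iff_cos_isingPhase (x : ℝ) :
    isingPartition K x = 0 ↔ Real.cos (isingPhase K v x) = 0 :=
  (isingPartition_eq_zero_iff_re_twistedEval K v x).trans <|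
    re_eq_zero_iff_cos_phase_eq_zero
      (fun x => (hasDerivAt_twistedEval _ _ x).differentiableAt)
      (twistedEval_ne_zero (aeval_plusPoly_edgeActivity_ne_zero hK hconn v))
      (continuous_logDeriv_twistedEval_plusPoly hK hconn v) (im_twistedEval_zero _ _) x

lemma isingPartition_pi_div_two_eq_zero_iff :
    isingPartition K (π / 2 : ℝ) = 0 ↔ Odd (Fintype.card V) := by
  have v : V := hconn.nonempty.some
  rw [isingPartition_eq_zero_iff_cos_isingPhase hK hconn v, isingPhase_pi_div_two hK hconn,
    Real.cos_eq_zero_iff]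
  have hhalf (k : ℤ) : Fintype.card V * (π / 2) = (2 * k + 1) * π / 2 ↔
      (Fintype.card V : ℤ) = 2 * k + 1 := by
    rw [mul_div_assoc, mul_left_inj' (by positivity)]
    exact_mod_cast Iff.rfl
  rw [← Int.odd_coe_nat, Odd]
  simp only [hhalf]

end IsingPartition

section VaryingCoupling

variable {V : Type} [DecidableEq V] (E : Finset (Sym2 V)) (J : Sym2 V → ℝ) (u₀ v₀ : V)

/-- The coupling at each pair: `J` on `E` and `0` elsewhere, plus `t` at the pair `u₀v₀`. -/
def totalCoupling (t : ℝ) (e : Sym2 V) : ℝ :=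
  (if e ∈ E then J e else 0) + if e = s(u₀, v₀) then t else 0

lemma continuous_totalCoupling : Continuous (totalCoupling E J u₀ v₀) := by
  unfold totalCoupling
  refine continuous_pi fun e => continuous_const.add ?_
  split_ifs <;> fun_prop

variable {E J}

lemma totalCoupling_nonneg (hferro : ∀ e ∈ E, 0 ≤ J e) {t : ℝ} (ht : 0 ≤ t) (e : Sym2 V) :
    0 ≤ totalCoupling E J u₀ v₀ t e := by
  unfold totalCoupling
  split_ifs with he <;> first | positivity | linarith [hferro e he]

lemma connected_totalCoupling_pos
    (hconn : (SimpleGraph.fromEdgeSet {e : Sym2 V | e ∈ E ∧ 0 < J e}).Connected) {t : ℝ}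
    (ht : 0 ≤ t) :
    (SimpleGraph.fromEdgeSet {e | 0 < totalCoupling E J u₀ v₀ t e}).Connected := by
  refine hconn.mono (SimpleGraph.fromEdgeSet_mono ?_)
  rintro e ⟨he, hJ⟩
  simp only [Set.mem_ofPred_eq, totalCoupling, if_pos he]
  split_ifs <;> linarith

variable (E J) [Fintype V]

lemma IsingZ_eq_isingPartition (t : ℝ) (x : ℂ) :
    IsingZ E J u₀ v₀ t x = isingPartition (totalCoupling E J u₀ v₀ t) x := by
  have hpair (σ : V → Bool) : pairProd σ s(u₀, v₀) = spin (σ u₀) * spin (σ v₀) := rfl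
  refine Finset.sum_congr rfl fun σ _ => ?_
  have henergy : ∑ e, totalCoupling E J u₀ v₀ t e * pairProd σ e =
      t * (spin (σ u₀) * spin (σ v₀)) + ∑ e ∈ E, J e * pairProd σ e := by
    simp [totalCoupling, add_mul, Finset.sum_add_distrib, hpair, add_comm]
  rw [henergy, Complex.ofReal_add, Complex.ofReal_mul t]

lemma IsingZ_mul_sinh (r s t x : ℂ) :
    IsingZ E J u₀ v₀ r x * Complex.sinh (t - s) =
      IsingZ E J u₀ v₀ s x * Complex.sinh (t - r) +
        IsingZ E J u₀ v₀ t x * Complex.sinh (r - s) := by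
  have hexp (ε : ℝ) (hε : ε = 1 ∨ ε = -1) :
      Complex.exp (r * ε) * Complex.sinh (t - s) =
        Complex.exp (s * ε) * Complex.sinh (t - r) +
          Complex.exp (t * ε) * Complex.sinh (r - s) := by
    rcases hε with rfl | rfl <;>
      simp only [Complex.sinh, sub_eq_add_neg, neg_add, Complex.exp_add, neg_neg,
        Complex.ofReal_neg, Complex.ofReal_one, mul_one, mul_neg] <;> ring
  have hspin (b : Bool) : spin b = 1 ∨ spin b = -1 := by cases b <;> simp [spin]
  simp only [IsingZ, Finset.sum_mul, ← Finset.sum_add_distrib]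
  refine Finset.sum_congr rfl fun σ _ => ?_
  have hε : spin (σ u₀) * spin (σ v₀) = 1 ∨ spin (σ u₀) * spin (σ v₀) = -1 := by
    rcases hspin (σ u₀) with hu | hu <;> rcases hspin (σ v₀) with hv | hv <;> simp [hu, hv]
  simp only [add_assoc, Complex.exp_add]
  linear_combination (Complex.exp (∑ e ∈ E, J e * pairProd σ e : ℝ) *
    Complex.exp (Complex.I * x * ((∑ u, spin (σ u) : ℝ) : ℂ))) * hexp _ hε

lemma IsingZ_eq_zero_of_ne {s t : ℝ} (hst : s ≠ t) {x : ℂ} (hs : IsingZ E J u₀ v₀ s x = 0)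
    (ht : IsingZ E J u₀ v₀ t x = 0) (r : ℂ) : IsingZ E J u₀ v₀ r x = 0 := by
  have hsinh : Complex.sinh (t - s) ≠ 0 := by
    exact_mod_cast (Real.sinh_ne_zero.2 (sub_ne_zero.2 hst.symm))
  have hcomb := IsingZ_mul_sinh E J u₀ v₀ r s t x
  rw [hs, ht, zero_mul, zero_mul, add_zero] at hcomb
  exact (mul_eq_zero.1 hcomb).resolve_right hsinh

end VaryingCoupling

theorem stmt1_general {V : Type} [Fintype V] [DecidableEq V]
    (E : Finset (Sym2 V)) (J : Sym2 V → ℝ) (u₀ v₀ : V)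
    (hferro : ∀ e ∈ E, 0 ≤ J e)
    (hconn : (SimpleGraph.fromEdgeSet {e : Sym2 V | e ∈ E ∧ 0 < J e}).Connected) :
    (∀ t : ℝ, 0 ≤ t → (IsingZ E J u₀ v₀ t ((π / 2 : ℝ) : ℂ) = 0 ↔ Odd (Fintype.card V))) ∧
    ∃ x : ℕ → ℝ → ℝ,
      IsZeroEnumeration (fun t z : ℝ => IsingZ E J u₀ v₀ t z) 0 (π / 2) (Fintype.card V / 2) x ∧
      ∀ k ∈ Finset.Icc 1 (Fintype.card V / 2),
        MotionTrichotomy (x k) (if k = 1 then 0 else x (k - 1) 0)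
          (if k = Fintype.card V / 2 then π / 2 else x (k + 1) 0) := by
  have hnonneg (t : ℝ) := totalCoupling_nonneg u₀ v₀ hferro (le_max_right t 0)
  have hconn' (t : ℝ) := connected_totalCoupling_pos u₀ v₀ hconn (le_max_right t 0)
  have hZ (t : ℝ) (ht : 0 ≤ t) (z : ℝ) : IsingZ E J u₀ v₀ t z = 0 ↔
      Real.cos (isingPhase (totalCoupling E J u₀ v₀ (max t 0)) u₀ z) = 0 := by
    rw [← isingPartition_eq_zero_iff_cos_isingPhase (hnonneg t) (hconn' t), max_eq_left ht,
      IsingZ_eq_isingPartition]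
  obtain ⟨x, hx⟩ := exists_isZeroEnumeration
    (continuous_uncurry_isingPhase ((continuous_totalCoupling E J u₀ v₀).comp (by fun_prop))
      hnonneg hconn' u₀)
    (fun t => strictMono_isingPhase (hnonneg t) (hconn' t) u₀) (fun _ => phase_zero _)
    (fun t => isingPhase_pi_div_two (hnonneg t) (hconn' t) u₀) hZ
  refine ⟨fun t ht => ?_, x, hx, fun k hk => hx.motionTrichotomy (fun s t hst y hs ht r => ?_) hk⟩
  · rw [IsingZ_eq_isingPartition]
    exact isingPartition_pi_div_two_eq_zero_iff (totalCoupling_nonneg u₀ v₀ hferro ht)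
      (connected_totalCoupling_pos u₀ v₀ hconn ht)
  · exact IsingZ_eq_zero_of_ne E J u₀ v₀ hst hs ht r

theorem stmt1 {V : Type} [Fintype V] [DecidableEq V]
    (E : Finset (Sym2 V)) (J : Sym2 V → ℝ) (u₀ v₀ : V)
    (hE : s(u₀, v₀) ∈ E)
    (hferro : ∀ e ∈ E, 0 ≤ J e)
    (hconn : (SimpleGraph.fromEdgeSet {e : Sym2 V | e ∈ E ∧ 0 < J e}).Connected)
    (n : ℕ) (hn : n = Fintype.card V) (hodd : Odd n) :
    (∀ t : ℝ, 0 ≤ t → IsingZ E J u₀ v₀ t ((π / 2 : ℝ) : ℂ) = 0) ∧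
    ∃ x : ℕ → ℝ → ℝ,
      (∀ k ∈ Finset.Icc 1 ((n - 1) / 2), ContinuousOn (x k) (Set.Ici 0)) ∧
      (∀ t : ℝ, 0 ≤ t →
        (∀ k ∈ Finset.Icc 1 ((n - 1) / 2), 0 < x k t ∧ x k t < π / 2) ∧
        (∀ k, 1 ≤ k → k < (n - 1) / 2 → x k t < x (k + 1) t) ∧
        {z : ℝ | z ∈ Set.Ioo 0 (π / 2) ∧ IsingZ E J u₀ v₀ t z = 0}
          = (fun k => x k t) '' Set.Icc 1 ((n - 1) / 2)) ∧
      (∀ k ∈ Finset.Icc 1 ((n - 1) / 2),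
        ExactlyOne
          (∀ t : ℝ, 0 ≤ t → x k t = x k 0)
          (StrictAntiOn (x k) (Set.Ici 0) ∧
            ∀ t : ℝ, 0 < t →
              x k t ∈ Set.Ioo (if k = 1 then 0 else x (k - 1) 0) (x k 0))
          (StrictMonoOn (x k) (Set.Ici 0) ∧
            ∀ t : ℝ, 0 < t →
              x k t ∈ Set.Ioo (x k 0)
                (if k = (n - 1) / 2 then π / 2 else x (k + 1) 0))) := by
  subst hn
  have hhalf : (Fintype.card V - 1) / 2 = Fintype.card V / 2 := by grind
  obtain ⟨hpi, x, hx, htri⟩ := stmt1_general E J u₀ v₀ hferro hconn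
  rw [hhalf]
  exact ⟨fun t ht => (hpi t ht).2 hodd, x, hx.continuousOn,
    fun t ht => ⟨fun k hk => (hx.mem_Ioo_and_eq_zero ht hk).1, hx.lt_succ t ht, hx.zeros_eq t ht⟩,
    htri⟩
end

section
/- Suppose that n is even, that J is ferromagnetic, and that the subgraph G_{>0} is connected. Let x_1, …, x_{n/2} : [0,∞) → ℝ be continuous functions such that for every t ≥ 0 one has 0 < x_1(t) < … < x_{n/2}(t) < π/2 and {x ∈ (0,π/2) : Z_{G,t}(x) = 0} = {x_1(t), …, x_{n/2}(t)}. Then for any indices k ≠ j, the entire trajectories are disjoint: x_k([0,∞)) ∩ x_j([0,∞)) = ∅. -/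
/-!
The weight of each configuration depends on `t` only through `exp (± t)`, so three values of
`Z_{G,t}(x)` at a fixed `x` satisfy a linear relation with coefficients `sinh (t - s)`,
`sinh (t - r)`, `sinh (r - s)`. Hence a zero common to two distinct times is a zero at all times.
If two trajectories, possibly at different times, passed through the same `y`, then at every time
some trajectory would be at `y`. The times at which the `k`-th one is there form a closed set;
these finitely many sets are disjoint and cover `[0, ∞)`, so by connectedness a single trajectory
stays at `y` forever, and both trajectories must coincide with it.
-/

open scoped Real

theorem exists_forall_eq_of_forall_mem_range {ι X Y : Type*} [Finite ι] [TopologicalSpace X]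
    [ConnectedSpace X] [TopologicalSpace Y] [T1Space Y] {f : ι → X → Y} {y : Y}
    (hf : ∀ i, Continuous (f i)) (hinj : ∀ t, Function.Injective fun i => f i t)
    (hy : ∀ t, y ∈ Set.range fun i => f i t) : ∃ i, ∀ t, f i t = y := by
  have hclosed (i : ι) : IsClosed (f i ⁻¹' {y}) := isClosed_singleton.preimage (hf i)
  have hcompl (i : ι) : (f i ⁻¹' {y})ᶜ = ⋃ j ∈ {j | j ≠ i}, f j ⁻¹' {y} := by
    ext t
    obtain ⟨m, hm⟩ := hy t
    have hiff (j : ι) : f j t = y ↔ j = m := by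
      rw [← hm]
      exact (hinj t).eq_iff
    simp [hiff, eq_comm]
  have hclopen (i : ι) : IsClopen (f i ⁻¹' {y}) := by
    refine ⟨hclosed i, isClosed_compl_iff.1 ?_⟩
    rw [hcompl]
    exact (Set.toFinite _).isClosed_biUnion fun j _ => hclosed j
  obtain ⟨t⟩ := (inferInstance : Nonempty X)
  obtain ⟨i, hi⟩ := hy t
  exact ⟨i, Set.eq_univ_iff_forall.1 ((hclopen i).eq_univ ⟨t, hi⟩)⟩

theorem eq_of_forall_mem_image {ι X Y : Type*} [TopologicalSpace X] [TopologicalSpace Y]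
    [T1Space Y] {I : Set ι} {S : Set X} {f : ι → X → Y} {y : Y} (hI : I.Finite)
    (hS : IsPreconnected S) (hf : ∀ i ∈ I, ContinuousOn (f i) S)
    (hinj : ∀ t ∈ S, Set.InjOn (fun i => f i t) I) (hy : ∀ t ∈ S, y ∈ (fun i => f i t) '' I)
    {i j : ι} (hi : i ∈ I) (hj : j ∈ I) (hyi : y ∈ f i '' S) (hyj : y ∈ f j '' S) : i = j := by
  obtain ⟨s, hs, his⟩ := hyi
  obtain ⟨t, ht, hjt⟩ := hyj
  have := hI.to_subtype
  have := Subtype.connectedSpace ⟨⟨s, hs⟩, hS⟩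
  obtain ⟨⟨m, hm⟩, hmy⟩ : ∃ m : I, ∀ r : S, f m r = y :=
    exists_forall_eq_of_forall_mem_range (f := fun (m : I) (r : S) => f m r)
      (fun m => (hf m m.2).domRestrict) (fun r => (hinj r r.2).injective)
      (fun r => by simpa using hy r r.2)
  calc
    i = m := hinj s hs hi hm (his.trans (hmy ⟨s, hs⟩).symm)
    _ = j := hinj t ht hm hj ((hmy ⟨t, ht⟩).trans hjt.symm)

theorem injOn_Icc_of_lt_add_one {α : Type*} [Preorder α] {f : ℕ → α} {a b : ℕ}
    (hf : ∀ k, a ≤ k → k < b → f k < f (k + 1)) : Set.InjOn f (Set.Icc a b) :=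
  (strictMonoOn_of_lt_add_one Set.ordConnected_Icc fun k _ hk hk' => hf k hk.1 hk'.2).injOn

theorem spin_mul_spin_eq_one_or_neg_one (a b : Bool) :
    spin a * spin b = 1 ∨ spin a * spin b = -1 := by
  cases a <;> cases b <;> simp [spin]

theorem sinh_sub_mul_exp_mul {ε : ℂ} (hε : ε = 1 ∨ ε = -1) (r s t : ℂ) :
    Complex.sinh (t - s) * Complex.exp (r * ε) =
      Complex.sinh (t - r) * Complex.exp (s * ε) +
        Complex.sinh (r - s) * Complex.exp (t * ε) := by
  obtain rfl | rfl := hε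
  · simp only [mul_one, Complex.sinh_sub, ← Complex.cosh_add_sinh]
    ring
  · simp only [mul_neg_one, Complex.sinh_sub, ← Complex.cosh_sub_sinh]
    ring

section Ising

variable {V : Type} [Fintype V] [DecidableEq V] {E : Finset (Sym2 V)} {J : Sym2 V → ℝ} {u₀ v₀ : V}

theorem sinh_sub_mul_isingZ (r s t z : ℂ) :
    Complex.sinh (t - s) * IsingZ E J u₀ v₀ r z =
      Complex.sinh (t - r) * IsingZ E J u₀ v₀ s z +
        Complex.sinh (r - s) * IsingZ E J u₀ v₀ t z := by
  simp only [IsingZ, Finset.mul_sum, ← Finset.sum_add_distrib]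
  refine Finset.sum_congr rfl fun σ _ => ?_
  have hε : ((spin (σ u₀) * spin (σ v₀) : ℝ) : ℂ) = 1 ∨
      ((spin (σ u₀) * spin (σ v₀) : ℝ) : ℂ) = -1 :=
    mod_cast spin_mul_spin_eq_one_or_neg_one (σ u₀) (σ v₀)
  simp only [add_assoc, Complex.exp_add _ (_ + _), ← mul_assoc, ← add_mul,
    sinh_sub_mul_exp_mul hε r s t]

theorem isingZ_eq_zero_of_sinh_sub_ne_zero {s t z : ℂ} (hst : Complex.sinh (t - s) ≠ 0)
    (hs : IsingZ E J u₀ v₀ s z = 0) (ht : IsingZ E J u₀ v₀ t z = 0) (r : ℂ) :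
    IsingZ E J u₀ v₀ r z = 0 := by
  have h := sinh_sub_mul_isingZ (E := E) (J := J) (u₀ := u₀) (v₀ := v₀) r s t z
  rw [hs, ht, mul_zero, mul_zero, add_zero] at h
  exact (mul_eq_zero.1 h).resolve_left hst

theorem stmt2_general {ι : Type*} {I : Set ι} {S A : Set ℝ} {x : ι → ℝ → ℝ} (hI : I.Finite)
    (hS : IsPreconnected S) (hcont : ∀ k ∈ I, ContinuousOn (x k) S)
    (hinj : ∀ t ∈ S, Set.InjOn (fun k => x k t) I)
    (hzeros : ∀ t ∈ S, {z : ℝ | z ∈ A ∧ IsingZ E J u₀ v₀ t z = 0} = (fun k => x k t) '' I) :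
    I.PairwiseDisjoint fun k => x k '' S := by
  intro k hk j hj hkj
  refine Set.disjoint_left.2 fun y hyk hyj => hkj ?_
  have ⟨s, hs, hks⟩ := hyk
  have ⟨t, ht, hjt⟩ := hyj
  obtain rfl | hst := eq_or_ne s t
  · exact hinj s hs hk hj (hks.trans hjt.symm)
  obtain ⟨hyA, hys⟩ := (hzeros s hs).superset ⟨k, hk, hks⟩
  obtain ⟨-, hyt⟩ := (hzeros t ht).superset ⟨j, hj, hjt⟩
  have hsinh : Complex.sinh (t - s) ≠ 0 := mod_cast Real.sinh_ne_zero.2 (sub_ne_zero.2 hst.symm)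
  have hy (r : ℝ) (hr : r ∈ S) : y ∈ (fun m => x m r) '' I :=
    (hzeros r hr).subset ⟨hyA, isingZ_eq_zero_of_sinh_sub_ne_zero hsinh hys hyt r⟩
  exact eq_of_forall_mem_image hI hS hcont hinj hy hk hj hyk hyj

end Ising

theorem stmt2 {V : Type} [Fintype V] [DecidableEq V]
    (E : Finset (Sym2 V)) (J : Sym2 V → ℝ) (u₀ v₀ : V)
    (hE : s(u₀, v₀) ∈ E)
    (hferro : ∀ e ∈ E, 0 ≤ J e)
    (hconn : (SimpleGraph.fromEdgeSet {e : Sym2 V | e ∈ E ∧ 0 < J e}).Connected)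
    (n : ℕ) (hn : n = Fintype.card V) (heven : Even n)
    (x : ℕ → ℝ → ℝ)
    (hcont : ∀ k ∈ Finset.Icc 1 (n / 2), ContinuousOn (x k) (Set.Ici 0))
    (hzeros : ∀ t : ℝ, 0 ≤ t →
      (∀ k ∈ Finset.Icc 1 (n / 2), 0 < x k t ∧ x k t < π / 2) ∧
      (∀ k, 1 ≤ k → k < n / 2 → x k t < x (k + 1) t) ∧
      {z : ℝ | z ∈ Set.Ioo 0 (π / 2) ∧ IsingZ E J u₀ v₀ t z = 0}
        = (fun k => x k t) '' Set.Icc 1 (n / 2)) :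
    ∀ k ∈ Finset.Icc 1 (n / 2), ∀ j ∈ Finset.Icc 1 (n / 2), k ≠ j →
      x k '' Set.Ici 0 ∩ x j '' Set.Ici 0 = ∅ := by
  simp only [Finset.mem_Icc, ← Set.mem_Icc] at hcont ⊢
  exact fun k hk j hj hkj => (stmt2_general (Set.finite_Icc _ _) isPreconnected_Ici hcont
    (fun t ht => injOn_Icc_of_lt_add_one (hzeros t ht).2.1) (fun t ht => (hzeros t ht).2.2)
    hk hj hkj).inter_eq
end

section
/- For any finite graph G=(V,E), any real pair interactions J, any reals t > 0 and s ≥ 0, and any x ∈ ℂ with Z_{G,t}(x) = 0, one has sinh(t−s) · Z_{G,0}(x) = sinh(t) · Z_{G,s}(x). -/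
open scoped Real

/-!
Every spin configuration contributes to `Z_{G,t}` a multiple of `exp t` or of `exp (-t)`, according
to whether the spins at `u₀` and `v₀` agree. Hence `t ↦ Z_{G,t}` lies in the two-dimensional space
spanned by these exponentials, so its values at any three couplings are linearly dependent; the
coefficients of the dependence are hyperbolic sines of the differences. At a zero of `Z_{G,t}` one
of the three terms vanishes.
-/

theorem sinh_sub_mul_exp_cyclic_sum_eq_zero (r s t : ℂ) :
    Complex.sinh (t - s) * Complex.exp r + Complex.sinh (s - r) * Complex.exp t
      + Complex.sinh (r - t) * Complex.exp s = 0 := by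
  simp only [← Complex.cosh_add_sinh, Complex.sinh_sub]
  ring

theorem sinh_sub_mul_exp_mul_cyclic_sum_eq_zero {ε : ℂ} (hε : ε ^ 2 = 1) (r s t : ℂ) :
    Complex.sinh (t - s) * Complex.exp (r * ε) + Complex.sinh (s - r) * Complex.exp (t * ε)
      + Complex.sinh (r - t) * Complex.exp (s * ε) = 0 := by
  rcases sq_eq_one_iff.mp hε with rfl | rfl
  · simpa only [mul_one] using sinh_sub_mul_exp_cyclic_sum_eq_zero r s t
  · have hneg := sinh_sub_mul_exp_cyclic_sum_eq_zero (-r) (-s) (-t)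
    simp only [← neg_sub', Complex.sinh_neg] at hneg
    simp only [mul_neg_one]
    linear_combination -hneg

theorem spin_sq (b : Bool) : spin b ^ 2 = 1 := by
  cases b <;> simp [spin]

theorem sinh_sub_mul_isingZ_cyclic_sum_eq_zero {V : Type} [Fintype V] [DecidableEq V]
    (E : Finset (Sym2 V)) (J : Sym2 V → ℝ) (u₀ v₀ : V) (r s t x : ℂ) :
    Complex.sinh (t - s) * IsingZ E J u₀ v₀ r x + Complex.sinh (s - r) * IsingZ E J u₀ v₀ t x
      + Complex.sinh (r - t) * IsingZ E J u₀ v₀ s x = 0 := by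
  simp only [IsingZ, Finset.mul_sum, ← Finset.sum_add_distrib]
  refine Finset.sum_eq_zero fun σ _ => ?_
  have hε : ((spin (σ u₀) * spin (σ v₀) : ℝ) : ℂ) ^ 2 = 1 := by
    rw [← Complex.ofReal_pow, mul_pow, spin_sq, spin_sq, mul_one, Complex.ofReal_one]
  simp only [Complex.exp_add, ← mul_assoc, ← add_mul]
  rw [sinh_sub_mul_exp_mul_cyclic_sum_eq_zero hε, zero_mul, zero_mul]

theorem stmt6_general {V : Type} [Fintype V] [DecidableEq V]
    (E : Finset (Sym2 V)) (J : Sym2 V → ℝ) (u₀ v₀ : V) (r s t x : ℂ)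
    (hx : IsingZ E J u₀ v₀ t x = 0) :
    Complex.sinh (t - s) * IsingZ E J u₀ v₀ r x = Complex.sinh (t - r) * IsingZ E J u₀ v₀ s x := by
  have hcyclic := sinh_sub_mul_isingZ_cyclic_sum_eq_zero E J u₀ v₀ r s t x
  rw [hx, mul_zero, add_zero, ← neg_sub t r, Complex.sinh_neg, neg_mul] at hcyclic
  exact add_neg_eq_zero.mp hcyclic

theorem stmt6 {V : Type} [Fintype V] [DecidableEq V]
    (E : Finset (Sym2 V)) (J : Sym2 V → ℝ) (u₀ v₀ : V)
    (hE : s(u₀, v₀) ∈ E)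
    (t s : ℝ) (ht : 0 < t) (hs : 0 ≤ s)
    (x : ℂ) (hx : IsingZ E J u₀ v₀ t x = 0) :
    ((Real.sinh (t - s) : ℝ) : ℂ) * IsingZ E J u₀ v₀ 0 x
      = ((Real.sinh t : ℝ) : ℂ) * IsingZ E J u₀ v₀ s x := by
  simpa only [Complex.ofReal_sinh, Complex.ofReal_sub, sub_zero]
    using stmt6_general E J u₀ v₀ 0 s t x hx
end
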